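/- arXiv:2110.11675 — 2 statements merged into one kernel-verified Lean document; each statement's English description precedes it below -/
import Mathlib

section
/- Let φ_1, …, φ_N be contractive similitudes on ℝ^d, let C = C_1 ∪ ⋯ ∪ C_m (m ≥ 2) be a union of pairwise disjoint arcs C_j, and let K be the attractor of the IFS with condensation {C; φ_1, …, φ_N}. Suppose: (i) K is an arc; (ii) K decomposes as γ_1 + γ_2 + ⋯ + γ_{m+N}, where γ_1, …, γ_{m+N} is a rearrangement (a bijective relabeling) of the list C_1, …, C_m, φ_1(K), …, φ_N(K) such that γ_1 and γ_{m+N} both belong to {C_1, …, C_m}; and (iii) dim_H E > 1, where E is the attractor of the iterated function system {φ_1, …, φ_N} and dim_H denotes Hausdorff dimension. Then K is a Whitney set. -/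
open Set MeasureTheory

noncomputable section

/-- An arc in `ℝ^d`: a subset homeomorphic to `[0,1]`, realized as the image of a
continuous injection of `[0,1]` (automatically a homeomorphism onto its image). -/
def IsArc {d : ℕ} (γ : Set (EuclideanSpace ℝ (Fin d))) : Prop :=
  ∃ h : ℝ → EuclideanSpace ℝ (Fin d), ContinuousOn h (Set.Icc 0 1) ∧
    Set.InjOn h (Set.Icc 0 1) ∧ h '' Set.Icc 0 1 = γ

/-- A compact connected set `E ⊆ ℝ^d` is a Whitney set if there is a `C¹` function
`f : ℝ^d → ℝ` whose derivative vanishes on `E` but which is not constant on `E`. -/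
def IsWhitneySet {d : ℕ} (E : Set (EuclideanSpace ℝ (Fin d))) : Prop :=
  IsCompact E ∧ IsConnected E ∧
    ∃ f : EuclideanSpace ℝ (Fin d) → ℝ,
      ContDiff ℝ 1 f ∧ (∀ x ∈ E, fderiv ℝ f x = 0) ∧
        ¬ ∀ x ∈ E, ∀ y ∈ E, f x = f y


open scoped Convolution in
lemma mollify_aux (d : ℕ) : ∃ B : ℝ, 0 ≤ B ∧
    ∀ (g : EuclideanSpace ℝ (Fin d) → ℝ), (∀ r : ℝ, LocallyIntegrable (fun w => g (r • w)) volume) →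
    ∀ r : ℝ, 0 < r → ∃ F : EuclideanSpace ℝ (Fin d) → ℝ, ContDiff ℝ 1 F ∧
      ∀ (x : EuclideanSpace ℝ (Fin d)) (c ε : ℝ), 0 ≤ ε →
        (∀ z ∈ Metric.ball x r, |g z - c| ≤ ε) →
        |F x - c| ≤ ε ∧ ‖fderiv ℝ F x‖ ≤ B * ε / r := by
  let b : ContDiffBump (0 : EuclideanSpace ℝ (Fin d)) := ⟨1/4, 1/2, by norm_num, by norm_num⟩
  let η : EuclideanSpace ℝ (Fin d) → ℝ := b.normed volume
  have hηc : HasCompactSupport η := b.hasCompactSupport_normed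
  have hηs : ContDiff ℝ 1 η := b.contDiff_normed
  let L := ContinuousLinearMap.lsmul ℝ ℝ (E := ℝ)
  have hts : tsupport η ⊆ Metric.ball 0 1 := by
    have : tsupport η = Metric.closedBall 0 b.rOut := b.tsupport_normed_eq
    rw [this]
    exact Metric.closedBall_subset_ball (by norm_num [b])
  have hs1 : Function.support η ⊆ Metric.ball 0 1 := (subset_tsupport η).trans hts
  have hs2 : Function.support (fderiv ℝ η) ⊆ Metric.ball 0 1 :=
    (support_fderiv_subset ℝ).trans hts
  have hcη : Continuous (fderiv ℝ η) := hηs.continuous_fderiv (by norm_num)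
  have hiη : Integrable (fderiv ℝ η) volume :=
    hcη.integrable_of_hasCompactSupport (hηc.fderiv (𝕜 := ℝ))
  let L' := ContinuousLinearMap.precompL (EuclideanSpace ℝ (Fin d)) L
  refine ⟨‖L‖ * ∫ x, ‖fderiv ℝ η x‖, mul_nonneg (norm_nonneg _) (integral_nonneg fun _ => norm_nonneg _), fun g hg r hr => ?_⟩
  let G : EuclideanSpace ℝ (Fin d) → ℝ := fun w => g (r • w)
  have hG : LocallyIntegrable G volume := hg r
  let P : EuclideanSpace ℝ (Fin d) → ℝ := η ⋆[L, volume] G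
  have hP : ContDiff ℝ 1 P := hηc.contDiff_convolution_left L (n := 1) hηs hG
  have hPd : ∀ w, HasFDerivAt P ((fderiv ℝ η ⋆[L', volume] G) w) w := fun w =>
    hηc.hasFDerivAt_convolution_left L hηs hG w
  have hzero : ∀ c : ℝ, ∫ t, L' (fderiv ℝ η t) c = 0 := by
    intro c
    have h1 := hηc.hasFDerivAt_convolution_left (μ := volume) L hηs
      (continuous_const (y := c)).locallyIntegrable 0
    have h2 : (η ⋆[L, volume] (fun _ => c)) = fun _ => c := by
      funext x
      have := b.integral_normed_smul (μ := (volume : Measure (EuclideanSpace ℝ (Fin d)))) c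
      simpa [convolution_def, L, η] using this
    rw [h2] at h1
    have := h1.unique (hasFDerivAt_const c _)
    simpa [convolution_def] using this
  refine ⟨fun x => P (r⁻¹ • x), hP.comp (contDiff_const_smul _), fun x c ε hε hx => ?_⟩
  have hx' : ∀ w ∈ Metric.ball (r⁻¹ • x) 1, dist (G w) c ≤ ε := by
    intro w hw
    rw [Real.dist_eq]
    apply hx
    rw [Metric.mem_ball] at hw ⊢
    have : x = r • (r⁻¹ • x) := by rw [smul_inv_smul₀ hr.ne']
    rw [this, dist_smul₀, Real.norm_of_nonneg hr.le]
    nlinarith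
  constructor
  · have := dist_convolution_le (μ := volume) hε hs1 b.nonneg_normed b.integral_normed
      hG.aestronglyMeasurable hx'
    rwa [Real.dist_eq] at this
  · have h1 := dist_convolution_le' L' (μ := volume) hε hiη hs2 hG.aestronglyMeasurable hx'
    rw [hzero c, dist_zero_right] at h1
    have h2 : HasFDerivAt (fun x : EuclideanSpace ℝ (Fin d) => r⁻¹ • x)
      (r⁻¹ • ContinuousLinearMap.id ℝ _) x := (hasFDerivAt_id x).const_smul r⁻¹
    have h3 := ((hPd (r⁻¹ • x)).comp x h2).fderiv
    change ‖fderiv ℝ (P ∘ fun x : EuclideanSpace ℝ (Fin d) => r⁻¹ • x) x‖ ≤ _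
    rw [h3, ContinuousLinearMap.comp_smul, ContinuousLinearMap.comp_id, norm_smul, norm_inv,
      Real.norm_of_nonneg hr.le, div_eq_inv_mul]
    refine mul_le_mul_of_nonneg_left (h1.trans ?_) (by positivity)
    refine mul_le_mul_of_nonneg_right (mul_le_mul_of_nonneg_right ?_ (integral_nonneg fun _ => norm_nonneg _)) hε
    exact ContinuousLinearMap.norm_precompL_le (EuclideanSpace ℝ (Fin d)) L


lemma ext_aux {d : ℕ} (K : Set (EuclideanSpace ℝ (Fin d))) (hK : IsCompact K) (hne : K.Nonempty)
    (f : EuclideanSpace ℝ (Fin d) → ℝ) (M s : ℝ) (hM : 0 ≤ M) (hs : 1 < s)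
    (hf : ∀ x ∈ K, ∀ y ∈ K, |f x - f y| ≤ M * dist x y ^ s) :
    ∃ A : ℝ, 0 ≤ A ∧ ∃ g : EuclideanSpace ℝ (Fin d) → ℝ, Continuous g ∧
      ∀ x, ∀ y ∈ K, |g x - f y| ≤ A * dist x y ^ s := by
  have : CompactSpace K := isCompact_iff_compactSpace.mp hK
  have : Nonempty K := hne.to_subtype
  have hs0 : 0 < s := by linarith
  have hcf : Continuous (fun y : K => f y) := by
    rw [continuous_iff_continuousAt]
    intro y
    rw [ContinuousAt, tendsto_iff_dist_tendsto_zero]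
    refine squeeze_zero (fun _ => dist_nonneg) (fun z => hf z z.2 y y.2) ?_
    have : Continuous (fun z : K => M * dist (z : EuclideanSpace ℝ (Fin d)) y ^ s) :=
      continuous_const.mul (Continuous.rpow_const (by fun_prop) (fun _ => Or.inr hs0.le))
    have h2 := this.tendsto y
    simpa [Real.zero_rpow hs0.ne'] using h2
  let A := 2 ^ s * M
  have hA : 0 ≤ A := by positivity
  let Φ : EuclideanSpace ℝ (Fin d) → K → ℝ := fun x y => f y + A * dist x (y : EuclideanSpace ℝ (Fin d)) ^ s
  have hΦ : Continuous (Function.uncurry Φ) := by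
    refine Continuous.add (hcf.comp continuous_snd) (continuous_const.mul (Continuous.rpow_const ?_ (fun _ => Or.inr hs0.le)))
    fun_prop
  refine ⟨A, hA, fun x => sInf (Φ x '' univ), isCompact_univ.continuous_sInf hΦ, fun x y hy => ?_⟩
  have hlow : ∀ v ∈ Φ x '' univ, f y - A * dist x y ^ s ≤ v := by
    rintro _ ⟨y', -, rfl⟩
    have h1 := (abs_le.mp (hf y hy y' y'.2)).2
    have h2 : dist y (y' : EuclideanSpace ℝ (Fin d)) ^ s ≤ 2 ^ s * (dist x y ^ s + dist x (y' : EuclideanSpace ℝ (Fin d)) ^ s) := by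
      have h3 : dist y (y' : EuclideanSpace ℝ (Fin d)) ≤ 2 * max (dist x y) (dist x (y' : EuclideanSpace ℝ (Fin d))) := by
        have := dist_triangle_left y (y' : EuclideanSpace ℝ (Fin d)) x
        have h4 := le_max_left (dist x y) (dist x (y' : EuclideanSpace ℝ (Fin d)))
        have h5 := le_max_right (dist x y) (dist x (y' : EuclideanSpace ℝ (Fin d)))
        linarith
      calc _ ≤ (2 * max (dist x y) (dist x (y' : EuclideanSpace ℝ (Fin d)))) ^ s :=
            Real.rpow_le_rpow dist_nonneg h3 hs0.le
        _ = 2 ^ s * (max (dist x y) (dist x (y' : EuclideanSpace ℝ (Fin d)))) ^ s :=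
            Real.mul_rpow (by norm_num) (le_max_of_le_left dist_nonneg)
        _ ≤ _ := by
            gcongr
            rcases max_cases (dist x y) (dist x (y' : EuclideanSpace ℝ (Fin d))) with h | h <;> rw [h.1]
            · have : 0 ≤ dist x (y' : EuclideanSpace ℝ (Fin d)) ^ s := by positivity
              linarith
            · have : 0 ≤ dist x y ^ s := by positivity
              linarith
    have h3 := mul_le_mul_of_nonneg_left h2 hM
    simp only [Φ, A]
    nlinarith
  have hne' : (Φ x '' univ).Nonempty := univ_nonempty.image _
  rw [abs_le]
  constructor
  · have := le_csInf hne' hlow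
    linarith
  · have : sInf (Φ x '' univ) ≤ Φ x ⟨y, hy⟩ := csInf_le ⟨_, hlow⟩ ⟨_, mem_univ _, rfl⟩
    have h2 : Φ x ⟨y, hy⟩ = f y + A * dist x y ^ s := rfl
    linarith

lemma cutoff_aux {d : ℕ} (K : Set (EuclideanSpace ℝ (Fin d))) (hK : IsCompact K) (B : ℝ)
    (hB : ∀ (g : EuclideanSpace ℝ (Fin d) → ℝ), (∀ r : ℝ, LocallyIntegrable (fun w => g (r • w)) volume) →
    ∀ r : ℝ, 0 < r → ∃ F : EuclideanSpace ℝ (Fin d) → ℝ, ContDiff ℝ 1 F ∧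
      ∀ (x : EuclideanSpace ℝ (Fin d)) (c ε : ℝ), 0 ≤ ε →
        (∀ z ∈ Metric.ball x r, |g z - c| ≤ ε) →
        |F x - c| ≤ ε ∧ ‖fderiv ℝ F x‖ ≤ B * ε / r) (r : ℝ) (hr : 0 < r) :
    ∃ χ : EuclideanSpace ℝ (Fin d) → ℝ, ContDiff ℝ 1 χ ∧ (∀ x, |χ x| ≤ 1) ∧
      (∀ x, ‖fderiv ℝ χ x‖ ≤ B / r) ∧ (∀ x ∈ K, χ x = 1 ∧ fderiv ℝ χ x = 0) ∧
      (∀ x, (∀ y ∈ K, 3 * r < dist x y) → χ x = 0 ∧ fderiv ℝ χ x = 0) := by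
  let S := Metric.cthickening (2 * r) K
  have hS : S = ⋃ y ∈ K, Metric.closedBall y (2 * r) :=
    hK.cthickening_eq_biUnion_closedBall (by positivity)
  obtain ⟨χ, h1, h2⟩ := hB (S.indicator fun _ => 1) (by
    intro ρ
    have : (fun w => S.indicator (fun _ => (1:ℝ)) (ρ • w)) =
      ((fun w : EuclideanSpace ℝ (Fin d) => ρ • w) ⁻¹' S).indicator (fun _ => (1:ℝ)) := by
      funext w; rfl
    rw [this]
    refine (continuous_const.locallyIntegrable).indicator ?_
    exact (Metric.isClosed_cthickening.preimage (by fun_prop)).measurableSet) r hr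
  have h01 : ∀ z, |S.indicator (fun _ => (1:ℝ)) z - 0| ≤ 1 := by
    intro z
    by_cases hz : z ∈ S <;> simp [hz]
  refine ⟨χ, h1, fun x => ?_, fun x => ?_, fun x hx => ?_, fun x hx => ?_⟩
  · simpa using (h2 x 0 1 zero_le_one (fun z _ => h01 z)).1
  · simpa using (h2 x 0 1 zero_le_one (fun z _ => h01 z)).2
  · have := h2 x 1 0 le_rfl (fun z hz => by
      have : z ∈ S := by
        rw [hS]
        refine mem_biUnion hx ?_
        rw [Metric.mem_ball] at hz
        rw [Metric.mem_closedBall]; linarith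
      simp [this])
    refine ⟨?_, ?_⟩
    · have := abs_nonpos_iff.mp this.1; linarith
    · have := this.2
      simpa using this
  · have := h2 x 0 0 le_rfl (fun z hz => by
      have : z ∉ S := by
        rw [hS]
        simp only [mem_iUnion, not_exists, Metric.mem_closedBall, not_le]
        intro y hy
        rw [Metric.mem_ball] at hz
        have := hx y hy
        have := dist_triangle_left x y z
        linarith
      simp [this])
    refine ⟨?_, ?_⟩
    · have := abs_nonpos_iff.mp this.1; linarith
    · have := this.2
      simpa using this

lemma whitney_ext {d : ℕ} (K : Set (EuclideanSpace ℝ (Fin d))) (hK : IsCompact K) (hne : K.Nonempty)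
    (f : EuclideanSpace ℝ (Fin d) → ℝ) (M s : ℝ) (hM : 0 ≤ M) (hs : 1 < s)
    (hf : ∀ x ∈ K, ∀ y ∈ K, |f x - f y| ≤ M * dist x y ^ s) :
    ∃ F : EuclideanSpace ℝ (Fin d) → ℝ, ContDiff ℝ 1 F ∧ (∀ x ∈ K, F x = f x) ∧
      ∀ x ∈ K, fderiv ℝ F x = 0 := by
  obtain ⟨A, hA, g, hgc, hg⟩ := ext_aux K hK hne f M s hM hs hf
  obtain ⟨B, hB0, hB⟩ := mollify_aux d
  let r : ℕ → ℝ := fun k => (1/2) ^ k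
  have hr : ∀ k, 0 < r k := fun k => by positivity
  have hr1 : ∀ k, r (k+1) = r k / 2 := fun k => by simp only [r, pow_succ]; ring
  choose F hF1 hF2 using fun k => hB g (fun ρ => (hgc.comp (continuous_const_smul ρ)).locallyIntegrable) (r k) (hr k)
  choose χ hχ1 hχ2 hχ3 hχ4 hχ5 using fun k => cutoff_aux K hK B hB (r k) (hr k)
  let a : ℝ := (1/2) ^ s
  have ha0 : 0 < a := by positivity
  have ha : 2 * a < 1 := by
    have : a < (1/2) ^ (1:ℝ) := Real.rpow_lt_rpow_of_exponent_gt (by norm_num) (by norm_num) hs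
    rw [Real.rpow_one] at this; linarith
  let ε : ℕ → ℝ := fun k => A * 4 ^ s * a ^ k
  have hε : ∀ k, ε k = A * (4 * r k) ^ s := by
    intro k
    simp only [ε, r, a]
    rw [Real.mul_rpow (by norm_num) (by positivity), ← Real.rpow_natCast, ← Real.rpow_mul (by norm_num),
      ← Real.rpow_natCast, ← Real.rpow_mul (by norm_num), mul_comm s]
    ring
  have hε0 : ∀ k, 0 ≤ ε k := fun k => by positivity
  have hεr : ∀ k, ε k / r k = A * 4 ^ s * (2 * a) ^ k := by
    intro k
    simp only [ε, r, one_div, inv_pow, mul_pow]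
    field_simp
  have hsum1 : Summable ε := (summable_geometric_of_lt_one ha0.le (by linarith)).mul_left _
  have hsum2 : Summable (fun k => ε k / r k) := by
    simp_rw [hεr]
    exact (summable_geometric_of_lt_one (by positivity) ha).mul_left _
  -- estimate near K
  have hnear : ∀ k j, r j ≤ r k → ∀ x, ∀ y ∈ K, dist x y ≤ 3 * r k →
      |F j x - f y| ≤ ε k ∧ ‖fderiv ℝ (F j) x‖ ≤ B * ε k / r j := by
    intro k j hj x y hy hxy
    refine hF2 j x (f y) (ε k) (hε0 k) fun z hz => (hg z y hy).trans ?_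
    rw [hε]
    rw [Metric.mem_ball] at hz
    have : dist z y ≤ 4 * r k := by
      have := dist_triangle z x y
      linarith
    gcongr
  have hself : ∀ k, ∀ x ∈ K, |F k x - f x| ≤ ε k ∧ ‖fderiv ℝ (F k) x‖ ≤ B * ε k / r k :=
    fun k x hx => hnear k k le_rfl x x hx (by rw [dist_self]; have := hr k; positivity)
  let D : ℕ → EuclideanSpace ℝ (Fin d) → ℝ := fun k x => F (k+1) x - F k x
  have hD1 : ∀ k, ContDiff ℝ 1 (D k) := fun k => (hF1 _).sub (hF1 _)
  have hFd : ∀ k x, DifferentiableAt ℝ (F k) x := fun k x =>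
    (hF1 k).contDiffAt.differentiableAt (by norm_num)
  have hDd : ∀ k x, DifferentiableAt ℝ (D k) x := fun k x => (hFd _ _).sub (hFd _ _)
  have hχd : ∀ k x, DifferentiableAt ℝ (χ k) x := fun k x =>
    (hχ1 k).contDiffAt.differentiableAt (by norm_num)
  have hDf : ∀ k x, fderiv ℝ (D k) x = fderiv ℝ (F (k+1)) x - fderiv ℝ (F k) x := fun k x =>
    fderiv_fun_sub (hFd _ _) (hFd _ _)
  let u : ℕ → EuclideanSpace ℝ (Fin d) → ℝ := fun k x => χ k x * D k x
  have hu1 : ∀ k, ContDiff ℝ 1 (u k) := fun k => (hχ1 k).mul (hD1 k)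
  have huf : ∀ k x, fderiv ℝ (u k) x = χ k x • fderiv ℝ (D k) x + D k x • fderiv ℝ (χ k) x :=
    fun k x => fderiv_fun_mul (hχd k x) (hDd k x)
  have hub : ∀ k x, |u k x| ≤ 2 * ε k ∧ ‖fderiv ℝ (u k) x‖ ≤ 5 * B * (ε k / r k) := by
    intro k x
    have he := hε0 k
    have hrk := hr k
    by_cases hx : ∀ y ∈ K, 3 * r k < dist x y
    · obtain ⟨h1, h2⟩ := hχ5 k x hx
      rw [huf, h1, h2]
      simp only [u, h1]
      constructor
      · simp only [zero_mul, abs_zero]; positivity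
      · simp only [zero_smul, smul_zero, add_zero, norm_zero]; positivity
    · push Not at hx
      obtain ⟨y, hy, hxy⟩ := hx
      obtain ⟨p1, p2⟩ := hnear k k le_rfl x y hy hxy
      obtain ⟨q1, q2⟩ := hnear k (k+1) (by rw [hr1]; linarith) x y hy hxy
      have hDb : |D k x| ≤ 2 * ε k := by
        rw [abs_le] at p1 q1 ⊢
        simp only [D]
        constructor <;> linarith [p1.1, p1.2, q1.1, q1.2]
      have hDfb : ‖fderiv ℝ (D k) x‖ ≤ 3 * B * (ε k / r k) := by
        rw [hDf]
        refine (norm_sub_le _ _).trans ((add_le_add q2 p2).trans (le_of_eq ?_))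
        rw [hr1]
        field_simp
        ring
      constructor
      · simp only [u, abs_mul]
        calc _ ≤ 1 * (2 * ε k) := mul_le_mul (hχ2 k x) hDb (abs_nonneg _) zero_le_one
          _ = _ := one_mul _
      · rw [huf]
        refine (norm_add_le _ _).trans ?_
        rw [norm_smul, norm_smul, Real.norm_eq_abs, Real.norm_eq_abs]
        have e1 := mul_le_mul (hχ2 k x) hDfb (norm_nonneg _) zero_le_one
        have e2 := mul_le_mul hDb (hχ3 k x) (norm_nonneg _) (by positivity)
        refine (add_le_add e1 e2).trans (le_of_eq ?_)
        ring
  have hsu : ∀ x, Summable (fun k => u k x) := fun x =>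
    Summable.of_norm_bounded (hsum1.mul_left 2) (fun k => (hub k x).1)
  have hU : ContDiff ℝ 1 (fun x => ∑' k, u k x) := by
    refine contDiff_tsum (N := 1) (v := fun _ k => 2 * ε k + 5 * B * (ε k / r k)) (fun k => hu1 k)
      (fun _ _ => (hsum1.mul_left 2).add (hsum2.mul_left _)) ?_
    intro j k x hj
    have hj' : j ≤ 1 := by exact_mod_cast hj
    have e1 : 0 ≤ 2 * ε k := by have := hε0 k; positivity
    have e2 : 0 ≤ 5 * B * (ε k / r k) := by have := hε0 k; have := hr k; positivity
    interval_cases j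
    · rw [norm_iteratedFDeriv_zero, Real.norm_eq_abs]
      linarith [(hub k x).1]
    · rw [norm_iteratedFDeriv_one]
      linarith [(hub k x).2]
  have hUf : ∀ x, fderiv ℝ (fun x => ∑' k, u k x) x = ∑' k, fderiv ℝ (u k) x := by
    intro x
    have := fderiv_tsum (𝕜 := ℝ) (hsum2.mul_left (5 * B))
      (fun k => (hu1 k).differentiable (by norm_num)) (fun k x => (hub k x).2) (hsu x)
    exact congrFun this x
  refine ⟨fun x => F 0 x + ∑' k, u k x, (hF1 0).add hU, fun x hx => ?_, fun x hx => ?_⟩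
  · have h1 := (hsu x).hasSum.tendsto_sum_nat
    have h2 : ∀ n, ∑ k ∈ Finset.range n, u k x = F n x - F 0 x := by
      intro n
      rw [← Finset.sum_range_sub (fun k => F k x)]
      refine Finset.sum_congr rfl fun k _ => ?_
      simp only [u, D, (hχ4 k x hx).1, one_mul]
    simp_rw [h2] at h1
    have h3 : Filter.Tendsto (fun n => F n x - f x) Filter.atTop (nhds 0) :=
      squeeze_zero_norm (fun n => (hself n x hx).1) hsum1.tendsto_atTop_zero
    have h4 := tendsto_nhds_unique h1 ((tendsto_sub_nhds_zero_iff.mp h3).sub_const (F 0 x))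
    simp only [h4]; ring
  · rw [fderiv_fun_add (hFd 0 x) (hU.contDiffAt.differentiableAt (by norm_num)), hUf]
    have hsf : Summable (fun k => fderiv ℝ (u k) x) :=
      Summable.of_norm_bounded (hsum2.mul_left (5 * B)) (fun k => (hub k x).2)
    have h1 := hsf.hasSum.tendsto_sum_nat
    have h2 : ∀ n, ∑ k ∈ Finset.range n, fderiv ℝ (u k) x = fderiv ℝ (F n) x - fderiv ℝ (F 0) x := by
      intro n
      rw [← Finset.sum_range_sub (fun k => fderiv ℝ (F k) x)]
      refine Finset.sum_congr rfl fun k _ => ?_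
      rw [huf, (hχ4 k x hx).1, (hχ4 k x hx).2, one_smul, smul_zero, add_zero, hDf]
    simp_rw [h2] at h1
    have h3 : Filter.Tendsto (fun n => fderiv ℝ (F n) x) Filter.atTop (nhds 0) := by
      refine squeeze_zero_norm (a := fun n => B * (ε n / r n)) (fun n => ?_) ?_
      · rw [← mul_div_assoc]; exact (hself n x hx).2
      · simpa using hsum2.tendsto_atTop_zero.const_mul B
    have h4 := tendsto_nhds_unique h1 (h3.sub_const (fderiv ℝ (F 0) x))
    rw [h4]; simp


open scoped NNReal ENNReal in
lemma dim_cover {d N : ℕ}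
    (φ : Fin N → EuclideanSpace ℝ (Fin d) → EuclideanSpace ℝ (Fin d))
    (r : Fin N → ℝ≥0) (q : ℝ≥0) (hq : ∀ i, r i ≤ q)
    (hl : ∀ i, LipschitzWith (r i) (φ i))
    (E : Set (EuclideanSpace ℝ (Fin d))) (hE : E = ⋃ i, φ i '' E) (s : ℝ) (hs : 0 ≤ s) (n : ℕ) :
    ∃ (ι : Type) (_ : Fintype ι) (t : ι → Set (EuclideanSpace ℝ (Fin d))),
      E ⊆ ⋃ i, t i ∧ (∀ i, Metric.ediam (t i) ≤ q ^ n * Metric.ediam E) ∧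
      ∑ i, Metric.ediam (t i) ^ s ≤ (∑ i, (r i : ℝ≥0∞) ^ s) ^ n * Metric.ediam E ^ s := by
  induction n with
  | zero =>
    exact ⟨Unit, inferInstance, fun _ => E, Set.subset_iUnion (fun _ : Unit => E) (), by simp, by simp⟩
  | succ n ih =>
    obtain ⟨ι, _, t, h1, h2, h3⟩ := ih
    refine ⟨Fin N × ι, inferInstance, fun p => φ p.1 '' t p.2, ?_, ?_, ?_⟩
    · intro x hx
      rw [hE] at hx
      obtain ⟨i, y, hy, rfl⟩ := mem_iUnion.mp hx
      obtain ⟨j, hj⟩ := mem_iUnion.mp (h1 hy)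
      exact mem_iUnion.mpr ⟨(i, j), y, hj, rfl⟩
    · rintro ⟨i, j⟩
      refine ((hl i).ediam_image_le _).trans ?_
      rw [pow_succ', mul_assoc]
      exact mul_le_mul' (by exact_mod_cast hq i) (h2 j)
    · calc ∑ p : Fin N × ι, Metric.ediam (φ p.1 '' t p.2) ^ s
          ≤ ∑ p : Fin N × ι, (r p.1 : ℝ≥0∞) ^ s * Metric.ediam (t p.2) ^ s := by
            refine Finset.sum_le_sum fun p _ => ?_
            rw [← ENNReal.mul_rpow_of_nonneg _ _ hs]
            exact ENNReal.rpow_le_rpow ((hl p.1).ediam_image_le _) hs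
        _ = (∑ i, (r i : ℝ≥0∞) ^ s) * ∑ j, Metric.ediam (t j) ^ s := by
            rw [Fintype.sum_prod_type, Finset.sum_mul_sum]
        _ ≤ _ := by
            rw [pow_succ', mul_assoc]
            exact mul_le_mul' le_rfl h3

open scoped NNReal ENNReal in
lemma dim_aux {d N : ℕ}
    (φ : Fin N → EuclideanSpace ℝ (Fin d) → EuclideanSpace ℝ (Fin d))
    (ρ : Fin N → ℝ) (hρ : ∀ i, ρ i ∈ Set.Ioo (0 : ℝ) 1)
    (hsim : ∀ i x y, dist (φ i x) (φ i y) = ρ i * dist x y)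
    (E : Set (EuclideanSpace ℝ (Fin d)))
    (hEcomp : IsCompact E)
    (hE : E = ⋃ i, φ i '' E) (hdim : 1 < dimH E) :
    ∃ s : ℝ, 1 < s ∧ 1 ≤ ∑ i, ρ i ^ s := by
  obtain ⟨s, hs1, hs2⟩ := ENNReal.lt_iff_exists_nnreal_btwn.mp hdim
  have hs1' : (1:ℝ) < s := by exact_mod_cast hs1
  refine ⟨s, hs1', ?_⟩
  by_contra! hlt
  let r : Fin N → ℝ≥0 := fun i => ⟨ρ i, (hρ i).1.le⟩
  obtain ⟨q, hq1, hq⟩ : ∃ q : ℝ≥0, q < 1 ∧ ∀ i, r i ≤ q := by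
    refine ⟨Finset.univ.sup r, ?_, fun i => Finset.le_sup (Finset.mem_univ i)⟩
    rw [Finset.sup_lt_iff (by simp)]
    intro i _
    exact_mod_cast (hρ i).2
  have hl : ∀ i, LipschitzWith (r i) (φ i) := fun i =>
    LipschitzWith.of_dist_le_mul fun x y => (hsim i x y).le
  have hc : (∑ i, (r i : ℝ≥0∞) ^ (s:ℝ)) < 1 := by
    have : (∑ i, (r i : ℝ≥0∞) ^ (s:ℝ)) = ((∑ i, r i ^ (s:ℝ) : ℝ≥0) : ℝ≥0∞) := by
      push_cast
      refine Finset.sum_congr rfl fun i _ => ?_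
      exact (ENNReal.coe_rpow_of_nonneg (r i) (NNReal.coe_nonneg s)).symm
    rw [this]
    have h2 : (∑ i, r i ^ (s:ℝ) : ℝ≥0) < 1 := by
      rw [← NNReal.coe_lt_coe]
      push_cast
      exact hlt
    exact_mod_cast h2
  have hD : Metric.ediam E ≠ ∞ := hEcomp.isBounded.ediam_ne_top
  choose ι hι t h1 h2 h3 using dim_cover φ r q hq hl E hE s s.2
  have key := Measure.hausdorffMeasure_le_liminf_sum (l := Filter.atTop) (s:ℝ) E
    (fun n : ℕ => (q:ℝ≥0∞) ^ n * Metric.ediam E) (by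
      have := ENNReal.Tendsto.mul_const (b := Metric.ediam E)
        (ENNReal.tendsto_pow_atTop_nhds_zero_of_lt_one (r := q) (by exact_mod_cast hq1)) (Or.inr hD)
      simpa using this) t (Filter.Eventually.of_forall h2) (Filter.Eventually.of_forall h1)
  have hlim : Filter.Tendsto (fun n => (∑ i, (r i : ℝ≥0∞) ^ (s:ℝ)) ^ n * Metric.ediam E ^ (s:ℝ)) Filter.atTop (nhds 0) := by
    have := ENNReal.Tendsto.mul_const (b := Metric.ediam E ^ (s:ℝ))
        (ENNReal.tendsto_pow_atTop_nhds_zero_of_lt_one hc) (Or.inr (ENNReal.rpow_ne_top_of_nonneg s.2 hD))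
    simpa using this
  have h0 : μH[(s:ℝ)] E ≤ 0 := by
    rw [← hlim.liminf_eq]
    exact key.trans (Filter.liminf_le_liminf (Filter.Eventually.of_forall h3))
  have := dimH_le_of_hausdorffMeasure_ne_top (s := E) (d := s) (ne_top_of_le_ne_top ENNReal.zero_ne_top h0)
  exact absurd hs2 (not_lt.mpr this)


lemma piece_param {d : ℕ} (h : ℝ → EuclideanSpace ℝ (Fin d))
    (hcont : ContinuousOn h (Set.Icc 0 1)) (hinj : Set.InjOn h (Set.Icc 0 1))
    (φ : EuclideanSpace ℝ (Fin d) → EuclideanSpace ℝ (Fin d)) (ρ : ℝ) (hρ : 0 < ρ)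
    (hsim : ∀ x y, dist (φ x) (φ y) = ρ * dist x y)
    (a b : ℝ) (ha : 0 ≤ a) (hb : b ≤ 1) (hab : a < b)
    (himg : h '' Icc a b = φ '' (h '' Icc 0 1))
    (τ₀ τ₁ : ℝ) (h0 : τ₀ ∈ Ioo (0:ℝ) 1) (h1 : τ₁ ∈ Ioo (0:ℝ) 1) :
    ∃ θ : ℝ → ℝ, (∀ u ∈ Icc a b, θ u ∈ Icc (0:ℝ) 1 ∧ φ (h (θ u)) = h u) ∧
      ∃ δ > 0, ((∀ u ∈ Icc a b, (u ≤ a + δ → θ u ≤ τ₀) ∧ (b - δ ≤ u → τ₁ ≤ θ u)) ∨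
        (∀ u ∈ Icc a b, (u ≤ a + δ → τ₁ ≤ θ u) ∧ (b - δ ≤ u → θ u ≤ τ₀))) := by
  have hsub : Icc a b ⊆ Icc (0:ℝ) 1 := Icc_subset_Icc ha hb
  have hφinj : Function.Injective φ := by
    intro x y hxy
    have := hsim x y
    rw [hxy, dist_self] at this
    rcases mul_eq_zero.mp this.symm with h | h
    · exact absurd h hρ.ne'
    · exact dist_eq_zero.mp h
  have hφc : Continuous φ :=
    (LipschitzWith.of_dist_le_mul (K := ⟨ρ, hρ.le⟩) fun x y => (hsim x y).le).continuous
  have hex : ∀ u : ℝ, ∃ v, u ∈ Icc a b → v ∈ Icc (0:ℝ) 1 ∧ φ (h v) = h u := by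
    intro u
    by_cases hu : u ∈ Icc a b
    · have : h u ∈ φ '' (h '' Icc 0 1) := himg ▸ mem_image_of_mem h hu
      obtain ⟨_, ⟨v, hv, rfl⟩, e⟩ := this
      exact ⟨v, fun _ => ⟨hv, e⟩⟩
    · exact ⟨0, fun h => absurd h hu⟩
  choose θ hθ using hex
  refine ⟨θ, hθ, ?_⟩
  have hθinj : InjOn θ (Icc a b) := by
    intro u hu v hv huv
    apply hinj (hsub hu) (hsub hv)
    rw [← (hθ u hu).2, ← (hθ v hv).2, huv]
  have hθsurj : ∀ w ∈ Icc (0:ℝ) 1, ∃ u ∈ Icc a b, θ u = w := by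
    intro w hw
    have : φ (h w) ∈ h '' Icc a b := himg ▸ mem_image_of_mem φ (mem_image_of_mem h hw)
    obtain ⟨u, hu, e⟩ := this
    refine ⟨u, hu, ?_⟩
    apply hinj (hθ u hu).1 hw
    apply hφinj
    rw [(hθ u hu).2, e]
  have hθc : ContinuousOn θ (Icc a b) := by
    let e : Icc (0:ℝ) 1 → EuclideanSpace ℝ (Fin d) := fun v => φ (h v)
    have hec : Continuous e := hφc.comp (continuousOn_iff_continuous_domRestrict.mp hcont)
    have hei : Function.Injective e := fun v w hvw => Subtype.ext (hinj v.2 w.2 (hφinj hvw))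
    have hemb := hec.isClosedEmbedding hei
    let θ' : Icc a b → Icc (0:ℝ) 1 := fun u => ⟨θ u, (hθ u u.2).1⟩
    have hc : Continuous θ' := by
      rw [hemb.isEmbedding.continuous_iff]
      have : e ∘ θ' = (Icc a b).domRestrict h := by
        funext u
        exact (hθ u u.2).2
      rw [this]
      exact continuousOn_iff_continuous_domRestrict.mp (hcont.mono hsub)
    exact continuousOn_iff_continuous_domRestrict.mpr (continuous_subtype_val.comp hc)
  obtain ⟨u0, hu0, e0⟩ := hθsurj τ₀ ⟨h0.1.le, h0.2.le⟩
  obtain ⟨u1, hu1, e1⟩ := hθsurj τ₁ ⟨h1.1.le, h1.2.le⟩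
  obtain ⟨z0, hz0, f0⟩ := hθsurj 0 ⟨le_rfl, zero_le_one⟩
  obtain ⟨z1, hz1, f1⟩ := hθsurj 1 ⟨zero_le_one, le_rfl⟩
  have h01 := h0.1
  have h12 := h1.2
  rcases hθc.strictMonoOn_of_injOn_Icc' hab.le hθinj with hm | hm
  · have p0 : z0 < u0 := (hm.lt_iff_lt hz0 hu0).mp (by rw [f0, e0]; exact h01)
    have p1 : u1 < z1 := (hm.lt_iff_lt hu1 hz1).mp (by rw [f1, e1]; exact h12)
    refine ⟨min (u0 - a) (b - u1), lt_min (by linarith [hz0.1]) (by linarith [hz1.2]), Or.inl ?_⟩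
    intro u hu
    constructor
    · intro hle
      rw [← e0]
      have := min_le_left (u0 - a) (b - u1)
      exact hm.monotoneOn hu hu0 (by linarith)
    · intro hle
      rw [← e1]
      have := min_le_right (u0 - a) (b - u1)
      exact hm.monotoneOn hu1 hu (by linarith)
  · have p0 : u0 < z0 := (hm.lt_iff_gt hz0 hu0).mp (by rw [f0, e0]; exact h01)
    have p1 : z1 < u1 := (hm.lt_iff_gt hu1 hz1).mp (by rw [f1, e1]; exact h12)
    refine ⟨min (u1 - a) (b - u0), lt_min (by linarith [hz1.1]) (by linarith [hz0.2]), Or.inr ?_⟩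
    intro u hu
    constructor
    · intro hle
      rw [← e1]
      have := min_le_left (u1 - a) (b - u0)
      exact hm.antitoneOn hu hu1 (by linarith)
    · intro hle
      rw [← e0]
      have := min_le_right (u1 - a) (b - u0)
      exact hm.antitoneOn hu0 hu (by linarith)

/-- Approximate solutions: functions on the parameter interval. -/
def GoodFn {d : ℕ} (h : ℝ → EuclideanSpace ℝ (Fin d)) (τ₀ τ₁ M s e : ℝ) (F : ℝ → ℝ) : Prop :=
  (∀ u ∈ Icc (0:ℝ) 1, F u ∈ Icc (0:ℝ) 1) ∧ (∀ u ∈ Icc (0:ℝ) 1, u ≤ τ₀ → F u = 0) ∧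
    (∀ u ∈ Icc (0:ℝ) 1, τ₁ ≤ u → F u = 1) ∧
    ∀ u ∈ Icc (0:ℝ) 1, ∀ v ∈ Icc (0:ℝ) 1, |F u - F v| ≤ M * dist (h u) (h v) ^ s + e

/-- A piece of the arc on which approximate solutions can be transplanted. -/
def PieceOK {d : ℕ} (h : ℝ → EuclideanSpace ℝ (Fin d)) (τ₀ τ₁ s q a b w δ : ℝ) : Prop :=
  ∀ M e : ℝ, 0 ≤ M → 0 ≤ e → ∀ F, GoodFn h τ₀ τ₁ M s e F → ∃ V : ℝ → ℝ,
    (∀ u, V u ∈ Icc 0 w) ∧ (∀ u, u ≤ a + δ → V u = 0) ∧ (∀ u, b - δ ≤ u → V u = w) ∧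
    ∀ u ∈ Icc a b, ∀ v ∈ Icc a b, |V u - V v| ≤ M * dist (h u) (h v) ^ s + q * e

lemma PieceOK.mono {d : ℕ} {h : ℝ → EuclideanSpace ℝ (Fin d)} {τ₀ τ₁ s q a b w δ δ' : ℝ}
    (H : PieceOK h τ₀ τ₁ s q a b w δ) (hδ : δ' ≤ δ) : PieceOK h τ₀ τ₁ s q a b w δ' := by
  intro M e hM he F hF
  obtain ⟨V, h1, h2, h3, h4⟩ := H M e hM he F hF
  exact ⟨V, h1, fun u hu => h2 u (by linarith), fun u hu => h3 u (by linarith), h4⟩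

lemma pieceOK_zero {d : ℕ} (h : ℝ → EuclideanSpace ℝ (Fin d)) (τ₀ τ₁ s q a b δ : ℝ) (hq : 0 ≤ q) :
    PieceOK h τ₀ τ₁ s q a b 0 δ := by
  intro M e hM he F hF
  refine ⟨fun _ => 0, by simp, by simp, by simp, fun u _ v _ => ?_⟩
  simp only [sub_self, abs_zero]
  positivity

lemma pieceOK_sim {d : ℕ} (h : ℝ → EuclideanSpace ℝ (Fin d))
    (hcont : ContinuousOn h (Set.Icc 0 1)) (hinj : Set.InjOn h (Set.Icc 0 1))
    (φ : EuclideanSpace ℝ (Fin d) → EuclideanSpace ℝ (Fin d)) (ρ : ℝ) (hρ : 0 < ρ)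
    (hsim : ∀ x y, dist (φ x) (φ y) = ρ * dist x y)
    (a b : ℝ) (ha : 0 ≤ a) (hb : b ≤ 1) (hab : a < b)
    (himg : h '' Icc a b = φ '' (h '' Icc 0 1))
    (τ₀ τ₁ : ℝ) (h0 : τ₀ ∈ Ioo (0:ℝ) 1) (h1 : τ₁ ∈ Ioo (0:ℝ) 1)
    (s q p : ℝ) (hp : 0 ≤ p) (hps : p ≤ ρ ^ s) (hpq : p ≤ q) :
    ∃ δ > 0, PieceOK h τ₀ τ₁ s q a b p δ := by
  obtain ⟨θ, hθ, δ, hδ, hor⟩ := piece_param h hcont hinj φ ρ hρ hsim a b ha hb hab himg τ₀ τ₁ h0 h1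
  refine ⟨min δ ((b - a) / 3), lt_min hδ (by linarith), ?_⟩
  intro M e hM he F ⟨hF1, hF2, hF3, hF4⟩
  set δ' := min δ ((b - a) / 3) with hδ'
  have hl := min_le_left δ ((b - a) / 3)
  have hr := min_le_right δ ((b - a) / 3)
  rw [← hδ'] at hl hr
  have hδpos : 0 < δ' := lt_min hδ (by linarith)
  -- oriented function
  obtain ⟨Q, hQ1, hQ2, hQ3, hQ4⟩ : ∃ Q : ℝ → ℝ, (∀ u ∈ Icc a b, Q u ∈ Icc (0:ℝ) 1) ∧
      (∀ u ∈ Icc a b, u ≤ a + δ → Q u = 0) ∧ (∀ u ∈ Icc a b, b - δ ≤ u → Q u = 1) ∧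
      ∀ u ∈ Icc a b, ∀ v ∈ Icc a b, |Q u - Q v| ≤ M * dist (h (θ u)) (h (θ v)) ^ s + e := by
    rcases hor with hor | hor
    · refine ⟨fun u => F (θ u), fun u hu => hF1 _ (hθ u hu).1,
        fun u hu hle => hF2 _ (hθ u hu).1 ((hor u hu).1 hle),
        fun u hu hle => hF3 _ (hθ u hu).1 ((hor u hu).2 hle),
        fun u hu v hv => hF4 _ (hθ u hu).1 _ (hθ v hv).1⟩
    · refine ⟨fun u => 1 - F (θ u), fun u hu => ?_,
        fun u hu hle => ?_,
        fun u hu hle => ?_,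
        fun u hu v hv => ?_⟩
      · have := hF1 _ (hθ u hu).1
        exact ⟨by linarith [this.2], by linarith [this.1]⟩
      · have := hF3 _ (hθ u hu).1 ((hor u hu).1 hle)
        simp [this]
      · have := hF2 _ (hθ u hu).1 ((hor u hu).2 hle)
        simp [this]
      · have := hF4 _ (hθ u hu).1 _ (hθ v hv).1
        rw [← abs_neg]
        convert this using 2
        ring
  have hdist : ∀ u ∈ Icc a b, ∀ v ∈ Icc a b, dist (h u) (h v) = ρ * dist (h (θ u)) (h (θ v)) := by
    intro u hu v hv
    rw [← hsim, (hθ u hu).2, (hθ v hv).2]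
  let V : ℝ → ℝ := fun u => if u ≤ a + δ' then 0 else if b - δ' ≤ u then p else p * Q u
  have hVQ : ∀ u ∈ Icc a b, V u = p * Q u := by
    intro u hu
    simp only [V]
    split_ifs with c1 c2
    · rw [hQ2 u hu (by linarith)]; simp
    · rw [hQ3 u hu (by linarith)]; simp
    · rfl
  refine ⟨V, fun u => ?_, fun u hu => ?_, fun u hu => ?_, fun u hu v hv => ?_⟩
  · simp only [V]
    split_ifs with c1 c2
    · exact ⟨le_rfl, hp⟩
    · exact ⟨hp, le_rfl⟩
    · have := hQ1 u ⟨by push Not at c1; linarith, by push Not at c2; linarith⟩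
      exact ⟨mul_nonneg hp this.1, mul_le_of_le_one_right hp this.2⟩
  · simp [V, hu]
  · have : ¬ u ≤ a + δ' := by push Not; linarith
    simp only [V]
    rw [if_neg this, if_pos hu]
  · rw [hVQ u hu, hVQ v hv, ← mul_sub, abs_mul, abs_of_nonneg hp, hdist u hu v hv,
      Real.mul_rpow hρ.le dist_nonneg]
    have hX : 0 ≤ dist (h (θ u)) (h (θ v)) ^ s := by positivity
    calc p * |Q u - Q v| ≤ p * (M * dist (h (θ u)) (h (θ v)) ^ s + e) :=
          mul_le_mul_of_nonneg_left (hQ4 u hu v hv) hp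
      _ = p * (M * dist (h (θ u)) (h (θ v)) ^ s) + p * e := by ring
      _ ≤ ρ ^ s * (M * dist (h (θ u)) (h (θ v)) ^ s) + q * e := by gcongr
      _ = _ := by ring

lemma exists_piece {n : ℕ} (hn : 0 < n) (t : Fin (n + 1) → ℝ) (ht0 : t 0 = 0)
    (htlast : t (Fin.last n) = 1) (u : ℝ) (hu : u ∈ Icc (0:ℝ) 1) :
    ∃ ℓ : Fin n, u ∈ Icc (t ℓ.castSucc) (t ℓ.succ) := by
  by_contra! hcon
  have hstep : ∀ ℓ : Fin n, t ℓ.castSucc ≤ u → t ℓ.succ < u := by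
    intro ℓ hℓ
    by_contra! hc
    exact hcon ℓ ⟨hℓ, hc⟩
  have hall : ∀ k : Fin (n + 1), t k ≤ u := by
    intro k
    induction k using Fin.induction with
    | zero => rw [ht0]; exact hu.1
    | succ ℓ ih => exact (hstep ℓ ih).le
  obtain ⟨k, rfl⟩ : ∃ k, n = k + 1 := ⟨n - 1, by omega⟩
  have := hstep (Fin.last k) (hall _)
  rw [Fin.succ_last, htlast] at this
  linarith [hu.2]

lemma good_step {d n : ℕ} (hn : 0 < n) (h : ℝ → EuclideanSpace ℝ (Fin d))
    (t : Fin (n + 1) → ℝ) (ht0 : t 0 = 0) (htlast : t (Fin.last n) = 1) (htmono : StrictMono t)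
    (τ₀ τ₁ s q M c δ : ℝ) (w : Fin n → ℝ) (hs : 0 < s) (hδ : 0 < δ) (hq : 0 ≤ q) (hM : 0 ≤ M) (hc : 0 < c)
    (hsum : ∑ ℓ, w ℓ = 1)
    (hw0 : ∀ ℓ, w ℓ = 0 ∨ τ₀ ≤ t ℓ.castSucc) (hw1 : ∀ ℓ, w ℓ = 0 ∨ t ℓ.succ ≤ τ₁)
    (hpc : ∀ ℓ, PieceOK h τ₀ τ₁ s q (t ℓ.castSucc) (t ℓ.succ) (w ℓ) δ)
    (hsep : ∀ u ∈ Icc (0:ℝ) 1, ∀ v ∈ Icc (0:ℝ) 1, δ ≤ v - u → c ≤ dist (h u) (h v))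
    (hMc : 1 ≤ M * c ^ s) (e : ℝ) (he : 0 ≤ e) (F : ℝ → ℝ) (hF : GoodFn h τ₀ τ₁ M s e F) :
    ∃ G, GoodFn h τ₀ τ₁ M s (q * e) G := by
  choose V hV1 hV2 hV3 hV4 using fun ℓ => hpc ℓ M e hM he F hF
  have hG01 : ∀ u, ∑ ℓ, V ℓ u ∈ Icc (0:ℝ) 1 := fun u =>
    ⟨Finset.sum_nonneg fun ℓ _ => (hV1 ℓ u).1,
      hsum ▸ Finset.sum_le_sum fun ℓ _ => (hV1 ℓ u).2⟩
  have hV0 : ∀ ℓ u, w ℓ = 0 → V ℓ u = 0 := by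
    intro ℓ u hw
    have := hV1 ℓ u
    rw [hw] at this
    exact le_antisymm this.2 this.1
  refine ⟨fun u => ∑ ℓ, V ℓ u, fun u _ => hG01 u, fun u _ hu => ?_, fun u _ hu => ?_, ?_⟩
  · refine Finset.sum_eq_zero fun ℓ _ => ?_
    rcases hw0 ℓ with h0 | h0
    · exact hV0 ℓ u h0
    · exact hV2 ℓ u (by linarith)
  · rw [← hsum]
    refine Finset.sum_congr rfl fun ℓ _ => ?_
    rcases hw1 ℓ with h0 | h0
    · rw [h0]; exact hV0 ℓ u h0
    · exact hV3 ℓ u (by linarith)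
  · have main : ∀ u ∈ Icc (0:ℝ) 1, ∀ v ∈ Icc (0:ℝ) 1, u ≤ v →
        |∑ ℓ, V ℓ u - ∑ ℓ, V ℓ v| ≤ M * dist (h u) (h v) ^ s + q * e := by
      intro u hu v hv huv
      have hqe : 0 ≤ q * e := by positivity
      by_cases hfar : δ ≤ v - u
      · have h1 := hG01 u
        have h2 := hG01 v
        have h3 : |∑ ℓ, V ℓ u - ∑ ℓ, V ℓ v| ≤ 1 := by
          rw [abs_le]; constructor <;> linarith [h1.1, h1.2, h2.1, h2.2]
        have h4 : M * c ^ s ≤ M * dist (h u) (h v) ^ s := by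
          have := hsep u hu v hv hfar
          gcongr
        linarith
      · push Not at hfar
        by_cases hk : ∃ k, u ≤ t k ∧ t k ≤ v
        · obtain ⟨k, hk1, hk2⟩ := hk
          have : ∑ ℓ, V ℓ u = ∑ ℓ, V ℓ v := by
            refine Finset.sum_congr rfl fun ℓ _ => ?_
            rcases le_or_gt k ℓ.castSucc with hkl | hkl
            · have := htmono.monotone hkl
              rw [hV2 ℓ u (by linarith), hV2 ℓ v (by linarith)]
            · have := htmono.monotone (Fin.castSucc_lt_iff_succ_le.mp hkl)
              rw [hV3 ℓ u (by linarith), hV3 ℓ v (by linarith)]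
          rw [this, sub_self, abs_zero]
          positivity
        · push Not at hk
          obtain ⟨ℓ, hℓ⟩ := exists_piece hn t ht0 htlast u hu
          have hv' : v < t ℓ.succ := hk _ hℓ.2
          have : ∑ ℓ, V ℓ u - ∑ ℓ, V ℓ v = V ℓ u - V ℓ v := by
            rw [← Finset.sum_sub_distrib]
            refine Finset.sum_eq_single ℓ (fun j _ hj => ?_) (by simp)
            rcases lt_or_gt_of_ne hj with hlt | hlt
            · have : t j.succ ≤ t ℓ.castSucc := htmono.monotone (Fin.le_def.mpr (by
                have := Fin.lt_def.mp hlt; simp; omega))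
              have h1 := hℓ.1
              rw [hV3 j u (by linarith), hV3 j v (by linarith), sub_self]
            · have : t ℓ.succ ≤ t j.castSucc := htmono.monotone (Fin.le_def.mpr (by
                have := Fin.lt_def.mp hlt; simp; omega))
              rw [hV2 j u (by linarith), hV2 j v (by linarith), sub_self]
          rw [this]
          exact hV4 ℓ u hℓ v ⟨hℓ.1.trans huv, hv'.le⟩
    intro u hu v hv
    rcases le_total u v with huv | huv
    · exact main u hu v hv huv
    · rw [abs_sub_comm, dist_comm]
      exact main v hv u hu huv

lemma good_limit {d : ℕ} (h : ℝ → EuclideanSpace ℝ (Fin d)) (τ₀ τ₁ M s q : ℝ) (hq0 : 0 ≤ q) (hq : q < 1)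
    (H : ∀ n : ℕ, ∃ F, GoodFn h τ₀ τ₁ M s (q ^ n) F) : ∃ F, GoodFn h τ₀ τ₁ M s 0 F := by
  choose F hF using H
  let 𝒰 : Ultrafilter ℕ := Filter.hyperfilter ℕ
  have hex : ∀ u : ℝ, ∃ x : ℝ, u ∈ Icc (0:ℝ) 1 →
      x ∈ Icc (0:ℝ) 1 ∧ Filter.Tendsto (fun n => F n u) 𝒰 (nhds x) := by
    intro u
    by_cases hu : u ∈ Icc (0:ℝ) 1
    · obtain ⟨x, hx, hx2⟩ := (isCompact_Icc (a := (0:ℝ)) (b := 1)).ultrafilter_le_nhds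
        (𝒰.map fun n => F n u) (by
          rw [Filter.le_principal_iff]
          exact Filter.mem_map.mpr (Filter.Eventually.of_forall fun n => (hF n).1 u hu))
      exact ⟨x, fun _ => ⟨hx, hx2⟩⟩
    · exact ⟨0, fun h => absurd h hu⟩
  choose G hG using hex
  refine ⟨G, fun u hu => (hG u hu).1, fun u hu h0 => ?_, fun u hu h1 => ?_, fun u hu v hv => ?_⟩
  · refine tendsto_nhds_unique (hG u hu).2 ?_
    simp_rw [(hF _).2.1 u hu h0]
    exact tendsto_const_nhds
  · refine tendsto_nhds_unique (hG u hu).2 ?_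
    simp_rw [(hF _).2.2.1 u hu h1]
    exact tendsto_const_nhds
  · have hq' : Filter.Tendsto (fun n : ℕ => q ^ n) 𝒰 (nhds 0) :=
      (tendsto_pow_atTop_nhds_zero_of_lt_one hq0 hq).mono_left Nat.hyperfilter_le_atTop
    exact le_of_tendsto_of_tendsto' ((hG u hu).2.sub (hG v hv).2).abs
      (hq'.const_add (M * dist (h u) (h v) ^ s)) (fun n => (hF n).2.2.2 u hu v hv)

lemma sep_aux {d : ℕ} (h : ℝ → EuclideanSpace ℝ (Fin d))
    (hcont : ContinuousOn h (Set.Icc 0 1)) (hinj : Set.InjOn h (Set.Icc 0 1)) (δ : ℝ) (hδ : 0 < δ) :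
    ∃ c > 0, ∀ u ∈ Icc (0:ℝ) 1, ∀ v ∈ Icc (0:ℝ) 1, δ ≤ v - u → c ≤ dist (h u) (h v) := by
  let S : Set (ℝ × ℝ) := (Icc (0:ℝ) 1 ×ˢ Icc (0:ℝ) 1) ∩ {p | δ ≤ p.2 - p.1}
  have hS : IsCompact S := (isCompact_Icc.prod isCompact_Icc).inter_right
    (isClosed_le continuous_const (by fun_prop))
  have hc : ContinuousOn (fun p : ℝ × ℝ => dist (h p.1) (h p.2)) S :=
    continuous_dist.comp_continuousOn (ContinuousOn.prodMk
      (ContinuousOn.comp (t := Icc (0:ℝ) 1) hcont continuousOn_fst (fun p hp => hp.1.1))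
      (ContinuousOn.comp (t := Icc (0:ℝ) 1) hcont continuousOn_snd (fun p hp => hp.1.2)))
  rcases S.eq_empty_or_nonempty with he | hne
  · refine ⟨1, one_pos, fun u hu v hv huv => ?_⟩
    have : (u, v) ∈ S := ⟨⟨hu, hv⟩, huv⟩
    rw [he] at this
    exact absurd this (notMem_empty _)
  · obtain ⟨p, hp, hmin⟩ := hS.exists_isMinOn hne hc
    refine ⟨dist (h p.1) (h p.2), ?_, fun u hu v hv huv => hmin (a := (u, v)) ⟨⟨hu, hv⟩, huv⟩⟩
    rw [gt_iff_lt, dist_pos]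
    intro heq
    have h1 := hinj hp.1.1 hp.1.2 heq
    have h2 : δ ≤ p.2 - p.1 := hp.2
    linarith

theorem whitney_of_ifs_with_condensation
    (d N m : ℕ) (hm : 2 ≤ m)
    -- the contractive similitudes φ_1, …, φ_N
    (φ : Fin N → EuclideanSpace ℝ (Fin d) → EuclideanSpace ℝ (Fin d))
    (ρ : Fin N → ℝ) (hρ : ∀ i, ρ i ∈ Set.Ioo (0 : ℝ) 1)
    (hsim : ∀ i x y, dist (φ i x) (φ i y) = ρ i * dist x y)
    -- the condensation set C = C_1 ∪ ⋯ ∪ C_m, a disjoint union of arcs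
    (C : Fin m → Set (EuclideanSpace ℝ (Fin d)))
    (hCarc : ∀ j, IsArc (C j))
    (hCdisj : Pairwise fun j j' => Disjoint (C j) (C j'))
    -- K is the attractor of the IFS with condensation {C; φ_1, …, φ_N}
    (K : Set (EuclideanSpace ℝ (Fin d)))
    (hKne : K.Nonempty) (hKcomp : IsCompact K)
    (hK : K = (⋃ j, C j) ∪ ⋃ i, φ i '' K)
    -- (i) & (ii): K is an arc which decomposes as γ_1 + ⋯ + γ_{m+N}, a rearrangement
    -- (via σ) of C_1, …, C_m, φ_1(K), …, φ_N(K), with first and last pieces among the C_j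
    (h : ℝ → EuclideanSpace ℝ (Fin d))
    (hcont : ContinuousOn h (Set.Icc 0 1)) (hinj : Set.InjOn h (Set.Icc 0 1))
    (himg : h '' Set.Icc 0 1 = K)
    (t : Fin (m + N + 1) → ℝ) (ht0 : t 0 = 0) (htlast : t (Fin.last (m + N)) = 1)
    (htmono : StrictMono t)
    (σ : Fin (m + N) ≃ (Fin m ⊕ Fin N))
    (hdecomp : ∀ ℓ : Fin (m + N),
      h '' Set.Icc (t ℓ.castSucc) (t ℓ.succ)
        = Sum.elim C (fun i => φ i '' K) (σ ℓ))
    (hfirst : (σ ⟨0, by omega⟩).isLeft = true)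
    (hlast : (σ ⟨m + N - 1, by omega⟩).isLeft = true)
    -- (iii): the attractor E of {φ_1, …, φ_N} has Hausdorff dimension > 1
    (E : Set (EuclideanSpace ℝ (Fin d)))
    (hEne : E.Nonempty) (hEcomp : IsCompact E)
    (hE : E = ⋃ i, φ i '' E)
    (hdim : 1 < dimH E) :
    IsWhitneySet K := by
  obtain ⟨s, hs1, hsum⟩ := dim_aux φ ρ hρ hsim E hEcomp hE hdim
  have hs0 : 0 < s := by linarith
  have hN : 0 < N := by
    rcases Nat.eq_zero_or_pos N with h0 | h0
    · subst h0
      simp at hsum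
      linarith
    · exact h0
  have hn : 0 < m + N := by omega
  set S := ∑ i, ρ i ^ s with hS
  have hSpos : 0 < S := by linarith
  let p : Fin N → ℝ := fun i => ρ i ^ s / S
  have hρs : ∀ i, 0 ≤ ρ i ^ s := fun i => Real.rpow_nonneg (hρ i).1.le s
  have hp0 : ∀ i, 0 ≤ p i := fun i => div_nonneg (hρs i) hSpos.le
  have hps : ∀ i, p i ≤ ρ i ^ s := fun i => div_le_self (hρs i) hsum
  have hpρ : ∀ i, p i ≤ ρ i := fun i => (hps i).trans (by
    have := Real.rpow_le_rpow_of_exponent_ge (hρ i).1 (hρ i).2.le hs1.le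
    rwa [Real.rpow_one] at this)
  have hpsum : ∑ i, p i = 1 := by
    simp only [p]
    rw [← Finset.sum_div, ← hS, div_self hSpos.ne']
  obtain ⟨q, hq0, hq1, hq⟩ : ∃ q : ℝ, 0 ≤ q ∧ q < 1 ∧ ∀ i, p i ≤ q := by
    haveI : Nonempty (Fin N) := ⟨⟨0, hN⟩⟩
    obtain ⟨i0, hi0⟩ := Finite.exists_max ρ
    exact ⟨ρ i0, (hρ i0).1.le, (hρ i0).2, fun i => (hpρ i).trans (hi0 i)⟩
  let k0 : Fin (m + N + 1) := ⟨1, by omega⟩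
  let k1 : Fin (m + N + 1) := ⟨m + N - 1, by omega⟩
  let τ₀ := t k0
  let τ₁ := t k1
  have h0lt : (0:ℝ) < τ₀ := by
    rw [← ht0]; exact htmono (Fin.lt_def.mpr (by simp [k0]))
  have h1lt : τ₁ < 1 := by
    rw [← htlast]; exact htmono (Fin.lt_def.mpr (by simp [k1]; omega))
  have h01 : τ₀ < τ₁ := htmono (Fin.lt_def.mpr (by simp [k0, k1]; omega))
  have hm0 : τ₀ ∈ Ioo (0:ℝ) 1 := ⟨h0lt, h01.trans h1lt⟩
  have hm1 : τ₁ ∈ Ioo (0:ℝ) 1 := ⟨h0lt.trans h01, h1lt⟩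
  let w : Fin (m + N) → ℝ := fun ℓ => Sum.elim (fun _ => 0) p (σ ℓ)
  have hwsum : ∑ ℓ, w ℓ = 1 := by
    have := Equiv.sum_comp σ (Sum.elim (fun _ => (0:ℝ)) p)
    simp only [w]
    rw [this, Fintype.sum_sum_type]
    simp [hpsum]
  have hwl : ∀ ℓ, (σ ℓ).isLeft = true → w ℓ = 0 := by
    intro ℓ hℓ
    obtain ⟨j, hj⟩ := Sum.isLeft_iff.mp hℓ
    simp [w, hj]
  have hw0 : ∀ ℓ, w ℓ = 0 ∨ τ₀ ≤ t ℓ.castSucc := by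
    intro ℓ
    by_cases hℓ : (ℓ : ℕ) = 0
    · left
      apply hwl
      have : ℓ = ⟨0, by omega⟩ := Fin.ext hℓ
      rw [this]; exact hfirst
    · right
      exact htmono.monotone (Fin.le_def.mpr (by simp [k0]; omega))
  have hw1 : ∀ ℓ, w ℓ = 0 ∨ t ℓ.succ ≤ τ₁ := by
    intro ℓ
    by_cases hℓ : (ℓ : ℕ) = m + N - 1
    · left
      apply hwl
      have : ℓ = ⟨m + N - 1, by omega⟩ := Fin.ext hℓ
      rw [this]; exact hlast
    · right
      have := ℓ.2
      exact htmono.monotone (Fin.le_def.mpr (by simp [k1]; omega))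
  have hpc : ∀ ℓ, ∃ δ > 0, PieceOK h τ₀ τ₁ s q (t ℓ.castSucc) (t ℓ.succ) (w ℓ) δ := by
    intro ℓ
    have hd := hdecomp ℓ
    rcases hσ : σ ℓ with j | i
    · rw [hwl ℓ (by rw [hσ]; rfl)]
      exact ⟨1, one_pos, pieceOK_zero h τ₀ τ₁ s q _ _ 1 hq0⟩
    · have hwp : w ℓ = p i := by simp [w, hσ]
      rw [hwp]
      rw [hσ] at hd
      refine pieceOK_sim h hcont hinj (φ i) (ρ i) (hρ i).1 (hsim i) _ _ ?_ ?_
        (htmono Fin.castSucc_lt_succ) (by rw [himg]; exact hd) τ₀ τ₁ hm0 hm1 s q (p i)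
        (hp0 i) (hps i) (hq i)
      · rw [← ht0]; exact htmono.monotone (Fin.zero_le _)
      · rw [← htlast]; exact htmono.monotone (Fin.le_last _)
  choose δs hδs hpc' using hpc
  haveI : Nonempty (Fin (m + N)) := ⟨⟨0, hn⟩⟩
  obtain ⟨ℓ0, hℓ0⟩ := Finite.exists_min δs
  obtain ⟨c, hc, hsep⟩ := sep_aux h hcont hinj (δs ℓ0) (hδs ℓ0)
  have hcs : 0 < c ^ s := Real.rpow_pos_of_pos hc s
  let M := 1 / c ^ s
  have hM : 0 ≤ M := by positivity
  have hMc : 1 ≤ M * c ^ s := by simp only [M]; rw [one_div_mul_cancel hcs.ne']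
  have hind : ∀ n : ℕ, ∃ F, GoodFn h τ₀ τ₁ M s (q ^ n) F := by
    intro n
    induction n with
    | zero =>
      refine ⟨fun u => if τ₁ ≤ u then 1 else 0, fun u _ => ?_, fun u _ hu => ?_,
        fun u _ hu => ?_, fun u _ v _ => ?_⟩
      · dsimp only
        split_ifs <;> simp
      · exact if_neg (by linarith)
      · exact if_pos hu
      · have : 0 ≤ M * dist (h u) (h v) ^ s := by positivity
        dsimp only
        rw [pow_zero]
        split_ifs <;> simp <;> linarith
    | succ n ih =>
      obtain ⟨F, hF⟩ := ih
      rw [pow_succ']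
      exact good_step hn h t ht0 htlast htmono τ₀ τ₁ s q M c (δs ℓ0) w hs0 (hδs ℓ0) hq0 hM hc
        hwsum hw0 hw1 (fun ℓ => (hpc' ℓ).mono (hℓ0 ℓ)) hsep hMc (q ^ n) (by positivity) F hF
  obtain ⟨F, -, hF0, hF1, hF⟩ := good_limit h τ₀ τ₁ M s q hq0 hq1 hind
  let f : EuclideanSpace ℝ (Fin d) → ℝ := fun x => F (Function.invFunOn h (Icc 0 1) x)
  have hfF : ∀ u ∈ Icc (0:ℝ) 1, f (h u) = F u := by
    intro u hu
    simp only [f]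
    rw [hinj.leftInvOn_invFunOn hu]
  have hHol : ∀ x ∈ K, ∀ y ∈ K, |f x - f y| ≤ M * dist x y ^ s := by
    rw [← himg]
    rintro _ ⟨u, hu, rfl⟩ _ ⟨v, hv, rfl⟩
    rw [hfF u hu, hfF v hv]
    simpa using hF u hu v hv
  obtain ⟨G, hG, hGf, hG0⟩ := whitney_ext K hKcomp hKne f M s hM hs1 hHol
  refine ⟨hKcomp, ?_, G, hG, hG0, ?_⟩
  · rw [← himg]
    exact (isConnected_Icc zero_le_one).image h hcont
  · intro hconst
    have i0 : (0:ℝ) ∈ Icc (0:ℝ) 1 := ⟨le_rfl, zero_le_one⟩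
    have i1 : (1:ℝ) ∈ Icc (0:ℝ) 1 := ⟨zero_le_one, le_rfl⟩
    have k0 : h 0 ∈ K := himg ▸ mem_image_of_mem h i0
    have k1 : h 1 ∈ K := himg ▸ mem_image_of_mem h i1
    have := hconst _ k0 _ k1
    rw [hGf _ k0, hGf _ k1, hfF 0 i0, hfF 1 i1, hF0 0 i0 h0lt.le, hF1 1 i1 h1lt.le] at this
    exact zero_ne_one this
end
end

section
/- Every self-similar arc γ in ℝ^d with Hausdorff dimension dim_H γ > 1 is a Whitney set. (No open set condition is assumed.) -/
open Set MeasureTheory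

noncomputable section

section Helpers

open Topology Filter

/-- Smooth Urysohn lemma, with equalities in neighbourhoods. -/
lemma smooth_urysohn {d : ℕ} (s t : Set (EuclideanSpace ℝ (Fin d))) (hs : IsClosed s)
    (ht : IsClosed t) (hst : Disjoint s t) :
    ∃ f : EuclideanSpace ℝ (Fin d) → ℝ, ContDiff ℝ 1 f ∧ (∀ x ∈ s, ∀ᶠ y in 𝓝 x, f y = 0) ∧
      (∀ x ∈ t, ∀ᶠ y in 𝓝 x, f y = 1) := by
  obtain ⟨f, h0, h1, -⟩ := exists_contMDiffMap_zero_one_nhds_of_isClosed (n := 1)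
    (modelWithCornersSelf ℝ (EuclideanSpace ℝ (Fin d))) hs ht hst
  exact ⟨f, f.contMDiff.contDiff, eventually_nhdsSet_iff_forall.1 h0,
    eventually_nhdsSet_iff_forall.1 h1⟩

/-- A similitude of Euclidean space has a `C¹` inverse, which is Lipschitz. -/
lemma similitude_inverse {d : ℕ} (φ : EuclideanSpace ℝ (Fin d) → EuclideanSpace ℝ (Fin d))
    (r : ℝ) (hr : 0 < r) (h : ∀ x y, dist (φ x) (φ y) = r * dist x y) :
    ∃ ψ : EuclideanSpace ℝ (Fin d) → EuclideanSpace ℝ (Fin d), ContDiff ℝ 1 ψ ∧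
      (∀ x, ψ (φ x) = x) ∧ (∀ x, φ (ψ x) = x) ∧ (∀ x, ‖fderiv ℝ ψ x‖ ≤ r⁻¹) := by
  have hi : Isometry (fun x => r⁻¹ • φ x) := by
    refine Isometry.of_dist_eq fun x y => ?_
    rw [dist_smul₀, h, Real.norm_of_nonneg (inv_nonneg.2 hr.le), inv_mul_cancel_left₀ hr.ne']
  let A := hi.affineIsometryOfStrictConvexSpace
  let B := A.toAffineIsometryEquiv rfl
  have hB : ∀ x, B x = r⁻¹ • φ x := fun x => by
    simp [B, A]
  have hl : ∀ x, B.symm (r⁻¹ • φ x) = x := fun x => by rw [← hB]; simp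
  have hc : ContDiff ℝ 1 (fun x => B.symm (r⁻¹ • x)) :=
    (ContinuousAffineMap.contDiff (B.symm.toAffineIsometry.toContinuousAffineMap)).comp (contDiff_const_smul _)
  refine ⟨fun x => B.symm (r⁻¹ • x), hc, hl, fun x => ?_, fun x => ?_⟩
  · have := hB (B.symm (r⁻¹ • x))
    rw [B.apply_symm_apply] at this
    exact (smul_right_injective _ (inv_ne_zero hr.ne') this).symm
  · have hlip : LipschitzWith ⟨r⁻¹, inv_nonneg.2 hr.le⟩ (fun x => B.symm (r⁻¹ • x)) := by
      refine LipschitzWith.of_dist_le_mul fun x y => ?_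
      rw [B.symm.dist_map, dist_smul₀, Real.norm_of_nonneg (inv_nonneg.2 hr.le)]
      rfl
    exact norm_fderiv_le_of_lipschitz ℝ hlip

/-- Auxiliary recursive sequence. -/
def levelFun {E ι : Type*} [Fintype ι] (ψ : ι → E → E) (c : ι → ℝ) (D : E → ℝ) : ℕ → E → ℝ
  | 0 => D
  | n + 1 => fun x => ∑ i, c i * levelFun ψ c D n (ψ i x)

lemma series_lemma {E ι : Type*} [NormedAddCommGroup E] [NormedSpace ℝ E] [Fintype ι]
    (ψ : ι → E → E) (r : ι → ℝ) (hψ : ∀ i, ContDiff ℝ 1 (ψ i))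
    (hψ' : ∀ i x, ‖fderiv ℝ (ψ i) x‖ ≤ (r i)⁻¹) (hr : ∀ i, r i ∈ Ioo (0:ℝ) 1)
    (c : ι → ℝ) (θ : ℝ) (hθ : θ < 1) (hθ0 : 0 ≤ θ) (hc : ∀ i, |c i| ≤ θ * r i)
    (K : Set E) (hK : IsClosed K) (hKc : IsCompact K) (hsub : ∀ i, ψ i ⁻¹' K ⊆ K)
    (hdisj : ∀ i j, i ≠ j → ∀ x, ψ i x ∈ K → ψ j x ∉ K)
    (D : E → ℝ) (hD : ContDiff ℝ 1 D) (hDK : ∀ x, x ∉ K → D x = 0) :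
    ∃ H : E → ℝ, ContDiff ℝ 1 H ∧ (∀ x, x ∉ K → H x = 0) ∧
      ∀ x, H x = D x + ∑ i, c i * H (ψ i x) := by
  classical
  set L := levelFun ψ c D with hL
  have hL0 : L 0 = D := rfl
  have hLs : ∀ n, L (n+1) = fun x => ∑ i, c i * L n (ψ i x) := fun n => rfl
  have hLK : ∀ n x, x ∉ K → L n x = 0 := by
    intro n
    induction n with
    | zero => exact hDK
    | succ n ih =>
      intro x hx
      rw [hLs]
      refine Finset.sum_eq_zero fun i _ => ?_
      rw [ih _ (fun h => hx (hsub i h)), mul_zero]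
  have hLdK : ∀ n x, x ∉ K → fderiv ℝ (L n) x = 0 := by
    intro n x hx
    have : L n =ᶠ[𝓝 x] fun _ => (0:ℝ) := by
      filter_upwards [hK.isOpen_compl.mem_nhds hx] with y hy using hLK n y hy
    rw [this.fderiv_eq]; simp
  have hLc : ∀ n, ContDiff ℝ 1 (L n) := by
    intro n
    induction n with
    | zero => exact hD
    | succ n ih =>
      rw [hLs]
      exact ContDiff.sum fun i _ => contDiff_const.mul (ih.comp (hψ i))
  obtain ⟨C0, hC0⟩ := hKc.exists_bound_of_continuousOn hD.continuous.continuousOn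
  obtain ⟨C1, hC1⟩ := hKc.exists_bound_of_continuousOn
    (hD.continuous_fderiv (by simp)).continuousOn
  set C := max 0 (max C0 C1) with hC
  have hCn : 0 ≤ C := le_max_left _ _
  have hcθ : ∀ i, |c i| ≤ θ := fun i =>
    (hc i).trans (mul_le_of_le_one_right hθ0 (hr i).2.le)
  have b0 : ∀ n x, ‖L n x‖ ≤ C * θ ^ n := by
    intro n
    induction n with
    | zero =>
      intro x
      by_cases hx : x ∈ K
      · rw [pow_zero, mul_one]
        exact (hC0 x hx).trans ((le_max_left _ _).trans (le_max_right _ _))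
      · rw [hLK 0 x hx]; simpa using hCn
    | succ n ih =>
      intro x
      rw [hLs]
      by_cases hx : ∃ i, ψ i x ∈ K
      · obtain ⟨i, hi⟩ := hx
        simp only
        rw [Finset.sum_eq_single i (fun j _ hj => by
          rw [hLK n _ (hdisj i j hj.symm x hi), mul_zero]) (by simp), norm_mul, Real.norm_eq_abs,
          pow_succ]
        calc |c i| * ‖L n (ψ i x)‖ ≤ θ * (C * θ ^ n) := by gcongr; exacts [hcθ i, ih _]
          _ = _ := by ring
      · push Not at hx
        simp only
        rw [Finset.sum_eq_zero (fun i _ => by rw [hLK n _ (hx i), mul_zero])]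
        simpa using mul_nonneg hCn (pow_nonneg hθ0 _)
  have hfd : ∀ n x, fderiv ℝ (L (n+1)) x =
      ∑ i, c i • (fderiv ℝ (L n) (ψ i x)).comp (fderiv ℝ (ψ i) x) := by
    intro n x
    rw [hLs]
    refine HasFDerivAt.fderiv ?_
    refine HasFDerivAt.fun_sum fun i _ => ?_
    refine HasFDerivAt.const_mul ?_ _
    exact (((hLc n).differentiable (by simp)).differentiableAt.hasFDerivAt).comp x
      ((hψ i).differentiable (by simp)).differentiableAt.hasFDerivAt
  have b1 : ∀ n x, ‖fderiv ℝ (L n) x‖ ≤ C * θ ^ n := by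
    intro n
    induction n with
    | zero =>
      intro x
      by_cases hx : x ∈ K
      · rw [pow_zero, mul_one]
        exact (hC1 x hx).trans ((le_max_right _ _).trans (le_max_right _ _))
      · rw [hLdK 0 x hx]; simpa using hCn
    | succ n ih =>
      intro x
      rw [hfd]
      by_cases hx : ∃ i, ψ i x ∈ K
      · obtain ⟨i, hi⟩ := hx
        rw [Finset.sum_eq_single i (fun j _ hj => by
          rw [hLdK n _ (hdisj i j hj.symm x hi)]; simp) (by simp), norm_smul, Real.norm_eq_abs,
          pow_succ]
        have h1 := (hr i).1
        calc |c i| * ‖(fderiv ℝ (L n) (ψ i x)).comp (fderiv ℝ (ψ i) x)‖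
            ≤ (θ * r i) * ((C * θ ^ n) * (r i)⁻¹) := by
              gcongr
              · exact hc i
              · exact (ContinuousLinearMap.opNorm_comp_le _ _).trans
                  (mul_le_mul (ih _) (hψ' i x) (norm_nonneg _) (by positivity))
          _ = _ := by field_simp
      · push Not at hx
        rw [Finset.sum_eq_zero (fun i _ => by rw [hLdK n _ (hx i)]; simp)]
        simpa using mul_nonneg hCn (pow_nonneg hθ0 _)
  have hsm : Summable fun n : ℕ => C * θ ^ n :=
    (summable_geometric_of_lt_one hθ0 hθ).mul_left C
  have hsum : ∀ x, Summable fun n => L n x := fun x =>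
    Summable.of_norm_bounded hsm (fun n => b0 n x)
  refine ⟨fun x => ∑' n, L n x, ?_, ?_, ?_⟩
  · refine contDiff_tsum (N := 1) (v := fun _ n => C * θ ^ n) hLc (fun k _ => hsm) ?_
    intro k n x hk
    have hk' : k ≤ 1 := by exact_mod_cast hk
    interval_cases k
    · simpa using b0 n x
    · rw [norm_iteratedFDeriv_one]; exact b1 n x
  · intro x hx
    simp [hLK _ x hx]
  · intro x
    simp only
    rw [(hsum x).tsum_eq_zero_add, hL0]
    congr 1
    simp only [hLs]
    rw [Summable.tsum_finsetSum (fun i _ => (hsum _).mul_left _)]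
    simp only [tsum_mul_left]


/-- A finite family of contracting similitudes whose attractor is `γ`, the pieces of which meet in
at most one point. -/
structure Fam {d : ℕ} (γ : Set (EuclideanSpace ℝ (Fin d))) {ι : Type}
    (φ : ι → EuclideanSpace ℝ (Fin d) → EuclideanSpace ℝ (Fin d)) (ρ : ι → ℝ) : Prop where
  ratio : ∀ i, ρ i ∈ Ioo (0 : ℝ) 1
  sim : ∀ i x y, dist (φ i x) (φ i y) = ρ i * dist x y
  cover : γ = ⋃ i, φ i '' γ
  sub : ∀ i j, i ≠ j → (φ i '' γ ∩ φ j '' γ).Subsingleton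

lemma Fam.inj {d : ℕ} {γ : Set (EuclideanSpace ℝ (Fin d))} {ι : Type}
    {φ : ι → EuclideanSpace ℝ (Fin d) → EuclideanSpace ℝ (Fin d)} {ρ : ι → ℝ}
    (F : Fam γ φ ρ) (i : ι) : Function.Injective (φ i) := by
  intro x y h
  have := F.sim i x y
  rw [h, dist_self] at this
  exact dist_eq_zero.1 ((mul_eq_zero.1 this.symm).resolve_left (F.ratio i).1.ne')

lemma Fam.subset {d : ℕ} {γ : Set (EuclideanSpace ℝ (Fin d))} {ι : Type}
    {φ : ι → EuclideanSpace ℝ (Fin d) → EuclideanSpace ℝ (Fin d)} {ρ : ι → ℝ}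
    (F : Fam γ φ ρ) (i : ι) : φ i '' γ ⊆ γ := by
  conv_rhs => rw [F.cover]
  exact subset_iUnion (fun i => φ i '' γ) i

lemma Fam.prod {d : ℕ} {γ : Set (EuclideanSpace ℝ (Fin d))} {ι κ : Type}
    {φ : ι → EuclideanSpace ℝ (Fin d) → EuclideanSpace ℝ (Fin d)} {ρ : ι → ℝ}
    {ψ : κ → EuclideanSpace ℝ (Fin d) → EuclideanSpace ℝ (Fin d)} {σ : κ → ℝ}
    (F : Fam γ φ ρ) (G : Fam γ ψ σ) :
    Fam γ (fun p : ι × κ => φ p.1 ∘ ψ p.2) (fun p => ρ p.1 * σ p.2) where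
  ratio p := by
    have h1 := F.ratio p.1
    have h2 := G.ratio p.2
    exact ⟨mul_pos h1.1 h2.1, mul_lt_one_of_nonneg_of_lt_one_left h1.1.le h1.2 h2.2.le⟩
  sim p x y := by simp only [Function.comp]; rw [F.sim, G.sim, mul_assoc]
  cover := by
    conv_lhs => rw [F.cover]
    rw [iUnion_prod']
    refine iUnion_congr fun i => ?_
    conv_lhs => rw [G.cover]
    rw [image_iUnion]
    simp only [image_comp]
  sub := by
    rintro ⟨i, k⟩ ⟨j, l⟩ hne
    by_cases hij : i = j
    · subst hij
      have hkl : k ≠ l := fun h => hne (by rw [h])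
      simp only [image_comp]
      rw [← image_inter (F.inj i)]
      exact (G.sub k l hkl).image _
    · refine (F.sub i j hij).anti (inter_subset_inter ?_ ?_)
      · simp only [image_comp]; exact image_mono (G.subset k)
      · simp only [image_comp]; exact image_mono (G.subset l)

lemma Fam.iterate {d : ℕ} {γ : Set (EuclideanSpace ℝ (Fin d))} {ι : Type} [Fintype ι]
    {φ : ι → EuclideanSpace ℝ (Fin d) → EuclideanSpace ℝ (Fin d)} {ρ : ι → ℝ}
    (F : Fam γ φ ρ) (r : ℝ) (hr : ∀ i, ρ i ≤ r) (n : ℕ) :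
    ∃ (κ : Type) (_ : Fintype κ)
      (ψ : κ → EuclideanSpace ℝ (Fin d) → EuclideanSpace ℝ (Fin d)) (σ : κ → ℝ),
      Fam γ ψ σ ∧ ∑ k, σ k = (∑ i, ρ i) ^ (n + 1) ∧ ∀ k, σ k ≤ r ^ (n + 1) := by
  induction n with
  | zero => exact ⟨ι, inferInstance, φ, ρ, F, by simp, by simpa using hr⟩
  | succ n ih =>
    obtain ⟨κ, _, ψ, σ, G, h1, h2⟩ := ih
    refine ⟨ι × κ, inferInstance, _, _, F.prod G, ?_, ?_⟩
    · rw [Fintype.sum_prod_type, pow_succ', ← h1, Finset.sum_mul_sum]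
    · rintro ⟨i, k⟩
      rw [pow_succ']
      exact mul_le_mul (hr i) (h2 k) (G.ratio k).1.le ((F.ratio i).1.le.trans (hr i))

lemma Fam.one_lt_sum {d : ℕ} {γ : Set (EuclideanSpace ℝ (Fin d))} {ι : Type} [Fintype ι]
    {φ : ι → EuclideanSpace ℝ (Fin d) → EuclideanSpace ℝ (Fin d)} {ρ : ι → ℝ}
    (F : Fam γ φ ρ) (hγ : IsCompact γ) (hdim : 1 < dimH γ) : 1 < ∑ i, ρ i := by
  by_contra hle
  push Not at hle
  obtain ⟨r, hr1, hr0, hr⟩ : ∃ r : ℝ, r < 1 ∧ 0 ≤ r ∧ ∀ i, ρ i ≤ r := by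
    rcases isEmpty_or_nonempty ι with h | h
    · exact ⟨0, by simp, le_rfl, fun i => (h.false i).elim⟩
    · obtain ⟨i, hi⟩ := Finite.exists_max ρ
      exact ⟨ρ i, (F.ratio i).2, (F.ratio i).1.le, hi⟩
  choose κ hκ ψ σ G h1 h2 using F.iterate r hr
  have hd : Metric.ediam γ ≠ ⊤ := hγ.isBounded.ediam_ne_top
  have hed : ∀ n k, Metric.ediam (ψ n k '' γ) ≤ ENNReal.ofReal (σ n k) * Metric.ediam γ := by
    intro n k
    have : LipschitzWith (σ n k).toNNReal (ψ n k) := by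
      refine LipschitzWith.of_dist_le_mul fun x y => ?_
      rw [(G n).sim, Real.coe_toNNReal _ ((G n).ratio k).1.le]
    exact this.ediam_image_le γ
  have hs0 : 0 ≤ ∑ i, ρ i := Finset.sum_nonneg fun i _ => (F.ratio i).1.le
  have key : μH[(1:ℝ)] γ ≤ Metric.ediam γ := by
    refine (Measure.hausdorffMeasure_le_liminf_sum (β := ℕ) (ι := κ) 1 γ (l := atTop)
      (fun n => ENNReal.ofReal (r ^ (n + 1)) * Metric.ediam γ) ?_ (fun n k => ψ n k '' γ) ?_ ?_).trans ?_
    · have : Tendsto (fun n : ℕ => ENNReal.ofReal (r ^ (n + 1))) atTop (𝓝 0) := by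
        rw [← ENNReal.ofReal_zero]
        exact ENNReal.tendsto_ofReal
          ((tendsto_pow_atTop_nhds_zero_of_lt_one hr0 hr1).comp (tendsto_add_atTop_nat 1))
      simpa using ENNReal.Tendsto.mul_const this (Or.inr hd)
    · refine Eventually.of_forall fun n k => (hed n k).trans ?_
      gcongr
      exact h2 n k
    · exact Eventually.of_forall fun n => (G n).cover.le
    · refine (liminf_le_liminf (v := fun _ => Metric.ediam γ) (Eventually.of_forall fun n => ?_)).trans
        (by simp)
      simp only [ENNReal.rpow_one]
      refine (Finset.sum_le_sum fun k _ => hed n k).trans ?_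
      rw [← Finset.sum_mul, ← ENNReal.ofReal_sum_of_nonneg (fun k _ => ((G n).ratio k).1.le), h1]
      refine mul_le_of_le_one_left zero_le ?_
      rw [ENNReal.ofReal_le_one]
      exact pow_le_one₀ hs0 hle
  have : dimH γ ≤ ((1 : NNReal) : ENNReal) :=
    dimH_le_of_hausdorffMeasure_ne_top (ne_top_of_le_ne_top hd (by simpa using key))
  exact absurd hdim (not_lt.2 (by simpa using this))

lemma Fam.large {d : ℕ} {γ : Set (EuclideanSpace ℝ (Fin d))} {ι : Type} [Fintype ι]
    {φ : ι → EuclideanSpace ℝ (Fin d) → EuclideanSpace ℝ (Fin d)} {ρ : ι → ℝ}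
    (F : Fam γ φ ρ) (hγ : IsCompact γ) (hdim : 1 < dimH γ) :
    ∃ (κ : Type) (_ : Fintype κ)
      (ψ : κ → EuclideanSpace ℝ (Fin d) → EuclideanSpace ℝ (Fin d)) (σ : κ → ℝ),
      Fam γ ψ σ ∧ 3 < ∑ k, σ k := by
  have h := F.one_lt_sum hγ hdim
  obtain ⟨n, hn⟩ := pow_unbounded_of_one_lt 3 h
  obtain ⟨κ, i, ψ, σ, G, h1, -⟩ := F.iterate 1 (fun i => (F.ratio i).2.le) n
  refine ⟨κ, i, ψ, σ, G, ?_⟩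
  rw [h1]
  exact hn.trans_le (pow_le_pow_right₀ h.le (Nat.le_succ n))

/-- Pieces of an arc are subarcs. -/
lemma piece_interval {d : ℕ} (h : ℝ → EuclideanSpace ℝ (Fin d)) (hc : ContinuousOn h (Icc 0 1))
    (hi : InjOn h (Icc 0 1)) (φ : EuclideanSpace ℝ (Fin d) → EuclideanSpace ℝ (Fin d))
    (hφ : Continuous φ) (hφi : Function.Injective φ)
    (hsub : φ '' (h '' Icc 0 1) ⊆ h '' Icc 0 1) :
    ∃ α β : ℝ, 0 ≤ α ∧ α < β ∧ β ≤ 1 ∧ φ '' (h '' Icc 0 1) = h '' Icc α β ∧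
      ((φ (h 0) = h α ∧ φ (h 1) = h β) ∨ (φ (h 0) = h β ∧ φ (h 1) = h α)) := by
  have hex : ∀ t ∈ Icc (0:ℝ) 1, ∃ u, u ∈ Icc (0:ℝ) 1 ∧ h u = φ (h t) := fun t ht =>
    hsub (mem_image_of_mem _ (mem_image_of_mem _ ht))
  choose! k hk hkh using hex
  have hemb : IsClosedEmbedding ((Icc (0:ℝ) 1).domRestrict h) :=
    (continuousOn_iff_continuous_domRestrict.1 hc).isClosedEmbedding (injOn_iff_injective.1 hi)
  have hkc : ContinuousOn k (Icc 0 1) := by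
    rw [continuousOn_iff_continuous_domRestrict]
    have : Continuous (fun t : Icc (0:ℝ) 1 => (⟨k t, hk t t.2⟩ : Icc (0:ℝ) 1)) := by
      rw [hemb.isEmbedding.continuous_iff]
      have : ((Icc (0:ℝ) 1).domRestrict h ∘ fun t : Icc (0:ℝ) 1 => (⟨k t, hk t t.2⟩ : Icc (0:ℝ) 1))
          = φ ∘ ((Icc (0:ℝ) 1).domRestrict h) := by
        funext t; exact hkh t t.2
      rw [this]
      exact hφ.comp (continuousOn_iff_continuous_domRestrict.1 hc)
    exact continuous_subtype_val.comp this
  have hki : InjOn k (Icc 0 1) := by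
    intro s hs t ht hst
    refine hi hs ht (hφi ?_)
    rw [← hkh s hs, ← hkh t ht, hst]
  have h0 : (0:ℝ) ∈ Icc (0:ℝ) 1 := by simp
  have h1 : (1:ℝ) ∈ Icc (0:ℝ) 1 := by simp
  have himg : φ '' (h '' Icc 0 1) = h '' (k '' Icc 0 1) := by
    rw [image_image, image_image]
    exact image_congr fun t ht => (hkh t ht).symm
  rcases hkc.strictMonoOn_of_injOn_Icc' zero_le_one hki with hm | hm
  · refine ⟨k 0, k 1, (hk 0 h0).1, hm h0 h1 one_pos, (hk 1 h1).2, ?_, Or.inl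
      ⟨(hkh 0 h0).symm, (hkh 1 h1).symm⟩⟩
    rw [himg]
    congr 1
    refine Subset.antisymm ?_ (intermediate_value_Icc zero_le_one hkc)
    rintro _ ⟨t, ht, rfl⟩
    exact ⟨hm.monotoneOn h0 ht ht.1, hm.monotoneOn ht h1 ht.2⟩
  · refine ⟨k 1, k 0, (hk 1 h1).1, hm h0 h1 one_pos, (hk 0 h0).2, ?_, Or.inr
      ⟨(hkh 0 h0).symm, (hkh 1 h1).symm⟩⟩
    rw [himg]
    congr 1
    refine Subset.antisymm ?_ (intermediate_value_Icc' zero_le_one hkc)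
    rintro _ ⟨t, ht, rfl⟩
    exact ⟨hm.antitoneOn ht h1 ht.2, hm.antitoneOn h0 ht ht.1⟩

/-- The topological facts about the pieces that we use. -/
lemma Fam.sides {d : ℕ} {γ : Set (EuclideanSpace ℝ (Fin d))} {ι : Type}
    {φ : ι → EuclideanSpace ℝ (Fin d) → EuclideanSpace ℝ (Fin d)} {ρ : ι → ℝ}
    (F : Fam γ φ ρ) (harc : ∃ h : ℝ → EuclideanSpace ℝ (Fin d), ContinuousOn h (Set.Icc 0 1) ∧
    Set.InjOn h (Set.Icc 0 1) ∧ h '' Set.Icc 0 1 = γ) :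
    ∃ a ∈ γ, ∃ b ∈ γ, (∀ i j, a ∈ φ i '' γ → a ∈ φ j '' γ → i = j) ∧
      (∀ i j, b ∈ φ i '' γ → b ∈ φ j '' γ → i = j) ∧
      ∀ i, ∃ P Q : Set (EuclideanSpace ℝ (Fin d)), IsClosed P ∧ IsClosed Q ∧ Disjoint P Q ∧
        φ i a ∈ P ∧ φ i b ∈ Q ∧ (∀ x ∈ P, x ∈ φ i '' γ → x = φ i a) ∧
        (∀ x ∈ Q, x ∈ φ i '' γ → x = φ i b) ∧ ((a ∈ P ∧ b ∈ Q) ∨ (a ∈ Q ∧ b ∈ P)) ∧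
        ∀ j, j ≠ i → φ j '' γ ⊆ P ∨ φ j '' γ ⊆ Q := by
  obtain ⟨h, hc, hi, hγ⟩ := harc
  have hcont : ∀ i, Continuous (φ i) := fun i =>
    (LipschitzWith.of_dist_le_mul (K := (ρ i).toNNReal) fun x y => by
      rw [F.sim, Real.coe_toNNReal _ (F.ratio i).1.le]).continuous
  have hp : ∀ i, ∃ α β : ℝ, 0 ≤ α ∧ α < β ∧ β ≤ 1 ∧ φ i '' γ = h '' Icc α β ∧
      ((φ i (h 0) = h α ∧ φ i (h 1) = h β) ∨ (φ i (h 0) = h β ∧ φ i (h 1) = h α)) := by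
    intro i
    have := piece_interval h hc hi (φ i) (hcont i) (F.inj i) (by rw [hγ]; exact F.subset i)
    rwa [hγ] at this
  choose α β hα hαβ hβ himg hend using hp
  have h0 : (0:ℝ) ∈ Icc (0:ℝ) 1 := by simp
  have h1 : (1:ℝ) ∈ Icc (0:ℝ) 1 := by simp
  have hmem : ∀ i t, t ∈ Icc (0:ℝ) 1 → h t ∈ φ i '' γ → t ∈ Icc (α i) (β i) := by
    intro i t ht hti
    rw [himg] at hti
    obtain ⟨s, hs, hst⟩ := hti
    rwa [← hi ⟨(hα i).trans hs.1, hs.2.trans (hβ i)⟩ ht hst]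
  have hover : ∀ i j, i ≠ j → β j ≤ α i ∨ β i ≤ α j := by
    intro i j hij
    by_contra hcon
    push Not at hcon
    have hlt : max (α i) (α j) < min (β i) (β j) :=
      max_lt (lt_min (hαβ i) hcon.1) (lt_min hcon.2 (hαβ j))
    have hin : ∀ t, max (α i) (α j) ≤ t → t ≤ min (β i) (β j) →
        t ∈ Icc (0:ℝ) 1 ∧ h t ∈ φ i '' γ ∩ φ j '' γ := by
      intro t ht1 ht2
      have a1 := (le_max_left _ _).trans ht1
      have a2 := (le_max_right _ _).trans ht1
      have a3 := ht2.trans (min_le_left _ _)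
      have a4 := ht2.trans (min_le_right _ _)
      refine ⟨⟨(hα i).trans a1, a3.trans (hβ i)⟩, ?_, ?_⟩
      · rw [himg]; exact mem_image_of_mem _ ⟨a1, a3⟩
      · rw [himg]; exact mem_image_of_mem _ ⟨a2, a4⟩
    obtain ⟨u1, u2⟩ := hin _ le_rfl hlt.le
    obtain ⟨v1, v2⟩ := hin _ hlt.le le_rfl
    exact hlt.ne (hi u1 v1 (F.sub i j hij u2 v2))
  have hcl : ∀ s t : ℝ, 0 ≤ s → t ≤ 1 → IsClosed (h '' Icc s t) := fun s t hs ht =>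
    (isCompact_Icc.image_of_continuousOn (hc.mono (Icc_subset_Icc hs ht))).isClosed
  refine ⟨h 0, hγ ▸ mem_image_of_mem _ h0, h 1, hγ ▸ mem_image_of_mem _ h1, ?_, ?_, ?_⟩
  · intro i j hii hjj
    by_contra hij
    have := hmem i 0 h0 hii
    have := hmem j 0 h0 hjj
    rcases hover i j hij with h | h <;> grind
  · intro i j hii hjj
    by_contra hij
    have := hmem i 1 h1 hii
    have := hmem j 1 h1 hjj
    rcases hover i j hij with h | h <;> grind
  · intro i
    have hL1 : IsClosed (h '' Icc 0 (α i)) := hcl _ _ le_rfl ((hαβ i).le.trans (hβ i))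
    have hR1 : IsClosed (h '' Icc (β i) 1) := hcl _ _ ((hα i).trans (hαβ i).le) le_rfl
    have hdis : Disjoint (h '' Icc 0 (α i)) (h '' Icc (β i) 1) := by
      rw [Set.disjoint_left]
      rintro _ ⟨s, hs, rfl⟩ ⟨t, ht, hst⟩
      have e := hi ⟨((hα i).trans (hαβ i).le).trans ht.1, ht.2⟩
        ⟨hs.1, hs.2.trans ((hαβ i).le.trans (hβ i))⟩ hst
      have := hαβ i
      have := hs.2
      have := ht.1
      linarith
    have hLα : h (α i) ∈ h '' Icc 0 (α i) := mem_image_of_mem _ ⟨hα i, le_rfl⟩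
    have hRβ : h (β i) ∈ h '' Icc (β i) 1 := mem_image_of_mem _ ⟨le_rfl, hβ i⟩
    have hL2 : ∀ x ∈ h '' Icc 0 (α i), x ∈ φ i '' γ → x = h (α i) := by
      rintro _ ⟨s, hs, rfl⟩ hx
      have := hmem i s ⟨hs.1, hs.2.trans ((hαβ i).le.trans (hβ i))⟩ hx
      rw [le_antisymm hs.2 this.1]
    have hR2 : ∀ x ∈ h '' Icc (β i) 1, x ∈ φ i '' γ → x = h (β i) := by
      rintro _ ⟨s, hs, rfl⟩ hx
      have := hmem i s ⟨((hα i).trans (hαβ i).le).trans hs.1, hs.2⟩ hx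
      rw [le_antisymm this.2 hs.1]
    have hL0 : h 0 ∈ h '' Icc 0 (α i) := mem_image_of_mem _ ⟨le_rfl, hα i⟩
    have hR0 : h 1 ∈ h '' Icc (β i) 1 := mem_image_of_mem _ ⟨hβ i, le_rfl⟩
    have hJ : ∀ j, j ≠ i → φ j '' γ ⊆ h '' Icc 0 (α i) ∨ φ j '' γ ⊆ h '' Icc (β i) 1 := by
      intro j hj
      rw [himg j]
      rcases hover i j hj.symm with h | h
      · exact Or.inl (image_mono (Icc_subset_Icc (hα j) h))
      · exact Or.inr (image_mono (Icc_subset_Icc h (hβ j)))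
    rcases hend i with ⟨e1, e2⟩ | ⟨e1, e2⟩
    · exact ⟨_, _, hL1, hR1, hdis, e1 ▸ hLα, e2 ▸ hRβ, by rwa [e1], by rwa [e2],
        Or.inl ⟨hL0, hR0⟩, hJ⟩
    · exact ⟨_, _, hR1, hL1, hdis.symm, e1 ▸ hRβ, e2 ▸ hLα, by rwa [e1], by rwa [e2],
        Or.inr ⟨hL0, hR0⟩, fun j hj => (hJ j hj).symm⟩


lemma glue {d : ℕ} (P Q C : Set (EuclideanSpace ℝ (Fin d))) (hP : IsClosed P) (hQ : IsClosed Q)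
    (hC : IsClosed C) (hPQ : Disjoint P Q) (p q : EuclideanSpace ℝ (Fin d)) (hp : p ∈ P)
    (hq : q ∈ Q) (hPC : ∀ x ∈ P, x ∈ C → x = p) (hQC : ∀ x ∈ Q, x ∈ C → x = q)
    (e : EuclideanSpace ℝ (Fin d) → ℝ) (he : ContDiff ℝ 1 e) (hep : ∀ᶠ y in 𝓝 p, e y = 0)
    (heq : ∀ᶠ y in 𝓝 q, e y = 1) :
    ∃ G : EuclideanSpace ℝ (Fin d) → ℝ, ContDiff ℝ 1 G ∧ (∀ x ∈ P, ∀ᶠ y in 𝓝 x, G y = 0) ∧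
      (∀ x ∈ Q, ∀ᶠ y in 𝓝 x, G y = 1) ∧ (∀ x ∈ C, ∀ᶠ y in 𝓝 x, G y = e y) := by
  obtain ⟨σ, hσ, hσ0, hσ1⟩ := smooth_urysohn P Q hP hQ hPQ
  set O : Set (EuclideanSpace ℝ (Fin d)) := {x | ∀ᶠ y in 𝓝 x, σ y = e y} with hO
  have hOo : IsOpen O := isOpen_setOfPred_eventually_nhds
  have hpO : p ∈ O := by
    filter_upwards [hep, hσ0 p hp] with y h1 h2
    rw [h1, h2]
  have hqO : q ∈ O := by
    filter_upwards [heq, hσ1 q hq] with y h1 h2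
    rw [h1, h2]
  obtain ⟨χ, hχ, hχ0, hχ1⟩ := smooth_urysohn (P ∪ Q) (C \ O) (hP.union hQ)
    (hC.sdiff hOo) (by
      rw [Set.disjoint_left]
      rintro x (hx | hx) ⟨hxC, hxO⟩
      · exact hxO (hPC x hx hxC ▸ hpO)
      · exact hxO (hQC x hx hxC ▸ hqO))
  refine ⟨fun x => χ x * e x + (1 - χ x) * σ x,
    (hχ.mul he).add ((contDiff_const.sub hχ).mul hσ), ?_, ?_, ?_⟩
  · intro x hx
    filter_upwards [hχ0 x (Or.inl hx), hσ0 x hx] with y h1 h2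
    rw [h1, h2]; ring
  · intro x hx
    filter_upwards [hχ0 x (Or.inr hx), hσ1 x hx] with y h1 h2
    rw [h1, h2]; ring
  · intro x hx
    by_cases hxO : x ∈ O
    · filter_upwards [hxO] with y h1
      rw [h1]; ring
    · filter_upwards [hχ1 x ⟨hx, hxO⟩] with y h1
      rw [h1]; ring

lemma Fam.whitney {d : ℕ} {γ : Set (EuclideanSpace ℝ (Fin d))} {ι : Type} [Fintype ι]
    {φ : ι → EuclideanSpace ℝ (Fin d) → EuclideanSpace ℝ (Fin d)} {ρ : ι → ℝ}
    (F : Fam γ φ ρ) (hγ : IsCompact γ)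
    (harc : ∃ h : ℝ → EuclideanSpace ℝ (Fin d), ContinuousOn h (Set.Icc 0 1) ∧
      Set.InjOn h (Set.Icc 0 1) ∧ h '' Set.Icc 0 1 = γ) (hsum : 3 < ∑ i, ρ i) :
    ∃ f : EuclideanSpace ℝ (Fin d) → ℝ,
      ContDiff ℝ 1 f ∧ (∀ x ∈ γ, fderiv ℝ f x = 0) ∧
        ¬ ∀ x ∈ γ, ∀ y ∈ γ, f x = f y := by
  classical
  obtain ⟨a, ha, b, hb, hau, hbu, hside⟩ := F.sides harc
  choose P Q hP hQ hPQ haP hbQ hPC hQC hab hpc using hside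
  have hcont : ∀ i, Continuous (φ i) := fun i =>
    (LipschitzWith.of_dist_le_mul (K := (ρ i).toNNReal) fun x y => by
      rw [F.sim, Real.coe_toNNReal _ (F.ratio i).1.le]).continuous
  have hcp : ∀ i, IsCompact (φ i '' γ) := fun i => hγ.image (hcont i)
  have hcov : ∀ x ∈ γ, ∃ i, x ∈ φ i '' γ := fun x hx => by
    rw [F.cover] at hx; exact mem_iUnion.1 hx
  obtain ⟨i0, hi0⟩ := hcov a ha
  obtain ⟨i1, hi1⟩ := hcov b hb
  choose ψ hψ hψφ hφψ hψd using fun i => similitude_inverse (φ i) (ρ i) (F.ratio i).1 (F.sim i)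
  let I := {i : ι // i ≠ i0 ∧ i ≠ i1}
  -- the sum over the interior pieces
  set S : ℝ := ∑ i : I, ρ i with hS
  have hS1 : 1 < S := by
    have e1 : S = ∑ i ∈ Finset.univ.filter (fun i => i ≠ i0 ∧ i ≠ i1), ρ i :=
      (Finset.sum_subtype _ (by simp) _).symm
    have e2 := Finset.sum_filter_add_sum_filter_not Finset.univ
      (fun i => i ≠ i0 ∧ i ≠ i1) ρ
    have e3 : ∑ i ∈ Finset.univ.filter (fun i => ¬ (i ≠ i0 ∧ i ≠ i1)), ρ i ≤ ρ i0 + ρ i1 := by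
      calc _ ≤ ∑ i, ((if i = i0 then ρ i else 0) + (if i = i1 then ρ i else 0)) := by
            rw [Finset.sum_filter]
            refine Finset.sum_le_sum fun i _ => ?_
            have := (F.ratio i).1
            split_ifs <;> first | linarith | (exfalso; tauto)
        _ = _ := by rw [Finset.sum_add_distrib]; simp
    have := (F.ratio i0).2
    have := (F.ratio i1).2
    linarith
  have hS0 : 0 < S := by linarith
  -- sides of the end pieces
  have hends : ∀ i : I, (φ i0 '' γ ⊆ P i ∧ φ i1 '' γ ⊆ Q i) ∨
      (φ i0 '' γ ⊆ Q i ∧ φ i1 '' γ ⊆ P i) := by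
    intro i
    have hd := Set.disjoint_left.1 (hPQ i)
    have h0 := hpc i i0 (fun h => i.2.1 h.symm)
    have h1 := hpc i i1 (fun h => i.2.2 h.symm)
    rcases hab i with ⟨hA, hB⟩ | ⟨hA, hB⟩
    · exact Or.inl ⟨h0.resolve_right fun h => hd hA (h hi0),
        h1.resolve_left fun h => hd (h hi1) hB⟩
    · exact Or.inr ⟨h0.resolve_left fun h => hd (h hi0) hA,
        h1.resolve_right fun h => hd hB (h hi1)⟩
  have hne : Nonempty I := by
    by_contra h
    rw [not_nonempty_iff] at h
    have : S = 0 := by rw [hS]; exact Finset.sum_of_isEmpty _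
    linarith
  have hdis01 : Disjoint (φ i0 '' γ) (φ i1 '' γ) := by
    obtain ⟨i⟩ := hne
    rcases hends i with ⟨h0, h1⟩ | ⟨h0, h1⟩
    · exact (hPQ i).mono h0 h1
    · exact (hPQ i).symm.mono h0 h1
  obtain ⟨g, hg, hg0, hg1⟩ := smooth_urysohn _ _ (hcp i0).isClosed (hcp i1).isClosed hdis01
  -- the step functions of the pieces
  have hG : ∀ i : I, ∃ (G : EuclideanSpace ℝ (Fin d) → ℝ) (s t : ℝ), |s| = 1 ∧ ContDiff ℝ 1 G ∧
      (∀ x ∈ φ i0 '' γ, ∀ᶠ y in 𝓝 x, G y = 0) ∧ (∀ x ∈ φ i1 '' γ, ∀ᶠ y in 𝓝 x, G y = 1) ∧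
      (∀ x ∈ φ i '' γ, ∀ᶠ y in 𝓝 x, G y = t + s * g (ψ i y)) ∧
      (∀ j : ι, j ≠ i → ∀ x ∈ φ j '' γ, ∃ c, ∀ᶠ y in 𝓝 x, G y = c) := by
    intro i
    have hψt : ∀ x, Tendsto (ψ i) (𝓝 (φ i x)) (𝓝 x) := fun x => by
      have := (hψ i).continuous.tendsto (φ i x)
      rwa [hψφ] at this
    obtain ⟨G, hGc, hGP, hGQ, hGe⟩ := glue (P i) (Q i) (φ i '' γ) (hP i) (hQ i) (hcp i).isClosed
      (hPQ i) (φ i a) (φ i b) (haP i) (hbQ i) (hPC i) (hQC i) (fun y => g (ψ i y))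
      (hg.comp (hψ i)) ((hψt a).eventually (hg0 a hi0)) ((hψt b).eventually (hg1 b hi1))
    rcases hends i with ⟨h0, h1⟩ | ⟨h0, h1⟩
    · refine ⟨G, 1, 0, by simp, hGc, fun x hx => hGP x (h0 hx), fun x hx => hGQ x (h1 hx),
        fun x hx => ?_, fun j hj x hx => ?_⟩
      · filter_upwards [hGe x hx] with y hy
        rw [hy]; ring
      · rcases hpc i j hj with h | h
        · exact ⟨0, hGP x (h hx)⟩
        · exact ⟨1, hGQ x (h hx)⟩
    · refine ⟨fun y => 1 - G y, -1, 1, by simp, contDiff_const.sub hGc, fun x hx => ?_,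
        fun x hx => ?_, fun x hx => ?_, fun j hj x hx => ?_⟩
      · filter_upwards [hGQ x (h0 hx)] with y hy
        rw [hy]; ring
      · filter_upwards [hGP x (h1 hx)] with y hy
        rw [hy]; ring
      · filter_upwards [hGe x hx] with y hy
        rw [hy]; ring
      · rcases hpc i j hj with h | h
        · refine ⟨1, ?_⟩
          filter_upwards [hGP x (h hx)] with y hy
          rw [hy]; ring
        · refine ⟨0, ?_⟩
          filter_upwards [hGQ x (h hx)] with y hy
          rw [hy]; ring
  choose G s t hs hGc hG0 hG1 hGi hGj using hG
  set F1 : EuclideanSpace ℝ (Fin d) → ℝ := fun x => ∑ i : I, ρ i / S * G i x with hF1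
  have hF1c : ContDiff ℝ 1 F1 := ContDiff.sum fun i _ => contDiff_const.mul (hGc i)
  have hp1 : ∑ i : I, ρ i / S = 1 := by
    rw [← Finset.sum_div]; exact div_self hS0.ne'
  have hF10 : ∀ x ∈ φ i0 '' γ, ∀ᶠ y in 𝓝 x, F1 y = 0 := by
    intro x hx
    filter_upwards [eventually_all.2 fun i => hG0 i x hx] with y hy
    simp [hF1, hy]
  have hF11 : ∀ x ∈ φ i1 '' γ, ∀ᶠ y in 𝓝 x, F1 y = 1 := by
    intro x hx
    filter_upwards [eventually_all.2 fun i => hG1 i x hx] with y hy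
    simp only [hF1, hy, mul_one]
    exact hp1
  have hF1i : ∀ i : I, ∀ x ∈ φ i '' γ, ∃ c, ∀ᶠ y in 𝓝 x,
      F1 y = c + (s i * (ρ i / S)) * g (ψ i y) := by
    intro i x hx
    have : ∀ j : I, ∃ c, ∀ᶠ y in 𝓝 x,
        ρ j / S * G j y = c + (if j = i then (s i * (ρ i / S)) * g (ψ i y) else 0) := by
      intro j
      by_cases hj : j = i
      · subst hj
        refine ⟨ρ j / S * t j, ?_⟩
        filter_upwards [hGi j x hx] with y hy
        rw [hy, if_pos rfl]; ring
      · obtain ⟨c, hc⟩ := hGj j i (fun h => hj (Subtype.ext h.symm)) x hx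
        refine ⟨ρ j / S * c, ?_⟩
        filter_upwards [hc] with y hy
        rw [hy, if_neg hj, add_zero]
    choose c hc using this
    refine ⟨∑ j, c j, ?_⟩
    filter_upwards [eventually_all.2 hc] with y hy
    simp only [hF1, hy, Finset.sum_add_distrib]
    congr 1
    rw [Finset.sum_eq_single i (fun j _ hj => if_neg hj) (fun h => absurd (Finset.mem_univ _) h),
      if_pos rfl]
  -- the core of the arc
  set Γ : Set (EuclideanSpace ℝ (Fin d)) := ⋃ i : I, φ i '' γ with hΓ
  have hΓc : IsCompact Γ := isCompact_iUnion fun i => hcp i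
  have hΓγ : Γ ⊆ γ := iUnion_subset fun i => F.subset i
  have ha' : a ∉ Γ := by
    rw [hΓ, mem_iUnion]
    rintro ⟨i, hi⟩
    exact i.2.1 (hau _ _ hi hi0)
  have hb' : b ∉ Γ := by
    rw [hΓ, mem_iUnion]
    rintro ⟨i, hi⟩
    exact i.2.2 (hbu _ _ hi hi1)
  have hdj : ∀ (i : I) (j : ι), j ≠ i → Disjoint (φ i '' Γ) (φ j '' γ) := by
    intro i j hj
    rw [Set.disjoint_left]
    rintro _ ⟨y, hy, rfl⟩ hx
    have hyi : φ i y ∈ φ i '' γ := mem_image_of_mem _ (hΓγ hy)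
    rcases hpc i j hj with h | h
    · exact ha' (F.inj i (hPC i _ (h hx) hyi) ▸ hy)
    · exact hb' (F.inj i (hQC i _ (h hx) hyi) ▸ hy)
  obtain ⟨ε, hε0, hε⟩ : ∃ ε : ℝ, 0 < ε ∧ ∀ (i : I) (j : ι), j ≠ i →
      Disjoint (Metric.cthickening ε (φ i '' Γ)) (Metric.cthickening ε (φ j '' γ)) := by
    have : ∀ᶠ ε in 𝓝[>] (0:ℝ), ∀ (i : I) (j : ι), j ≠ i →
        Disjoint (Metric.cthickening ε (φ i '' Γ)) (Metric.cthickening ε (φ j '' γ)) := by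
      refine eventually_all.2 fun i => eventually_all.2 fun j => ?_
      by_cases hj : j = i
      · exact Eventually.of_forall fun _ h => absurd hj h
      · obtain ⟨δ, hδ, hd⟩ := (hdj i j hj).exists_cthickenings (hΓc.image (hcont i))
          (hcp j).isClosed
        filter_upwards [Ioc_mem_nhdsGT hδ] with ε hε _
        exact hd.mono (Metric.cthickening_mono hε.2 _) (Metric.cthickening_mono hε.2 _)
    obtain ⟨ε, h1, h2⟩ := (this.and self_mem_nhdsWithin).exists
    exact ⟨ε, h2, h1⟩
  set K := Metric.cthickening ε Γ with hK
  have hKc : IsCompact K := hΓc.cthickening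
  have hKi : ∀ (i : I) x, ψ i x ∈ K → x ∈ Metric.cthickening ε (φ i '' Γ) := by
    intro i x hx
    rw [hK, hΓc.cthickening_eq_biUnion_closedBall hε0.le] at hx
    obtain ⟨z, hz, hxz⟩ := mem_iUnion₂.1 hx
    refine Metric.mem_cthickening_of_dist_le x (φ i z) ε _ (mem_image_of_mem _ hz) ?_
    rw [← hφψ i x, F.sim]
    exact (mul_le_of_le_one_left dist_nonneg (F.ratio i).2.le).trans hxz
  have hφΓ : ∀ i : I, φ i '' Γ ⊆ φ i '' γ := fun i => image_mono hΓγ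
  have hKsub : ∀ i : I, ψ i ⁻¹' K ⊆ K := fun i x hx =>
    Metric.cthickening_subset_of_subset ε
      ((hφΓ i).trans (subset_iUnion (fun i : I => φ i '' γ) i)) (hKi i x hx)
  have hKdis : ∀ i j : I, i ≠ j → ∀ x, ψ i x ∈ K → ψ j x ∉ K := by
    intro i j hij x hx hx'
    exact Set.disjoint_left.1 (hε i j (fun h => hij (Subtype.ext h.symm))) (hKi i x hx)
      (Metric.cthickening_subset_of_subset ε (hφΓ j) (hKi j x hx'))
  have hKγ : ∀ (i : I) (j : ι), j ≠ i → ∀ x ∈ φ j '' γ, ψ i x ∉ K := by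
    intro i j hj x hx hx'
    exact Set.disjoint_left.1 (hε i j hj) (hKi i x hx') (Metric.self_subset_cthickening _ hx)
  -- the cut off
  have hint : Γ ⊆ interior K :=
    (Metric.self_subset_thickening hε0 Γ).trans
      (interior_maximal (Metric.thickening_subset_cthickening _ _) Metric.isOpen_thickening)
  obtain ⟨χ, hχ, hχ0, hχ1⟩ := smooth_urysohn (interior K)ᶜ Γ isOpen_interior.isClosed_compl
    hΓc.isClosed (by
      rw [Set.disjoint_right]; exact fun x hx h => h (hint hx))
  have hDK : ∀ x, x ∉ K → χ x * (F1 x - g x) = 0 := fun x hx => by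
    rw [(hχ0 x (fun h => hx (interior_subset h))).self_of_nhds, zero_mul]
  obtain ⟨H, hHc, hHK, hHeq⟩ := series_lemma (fun i : I => ψ i) (fun i : I => ρ i)
    (fun i => hψ i) (fun i => hψd i) (fun i => F.ratio i) (fun i : I => s i * (ρ i / S)) S⁻¹
    (inv_lt_one_of_one_lt₀ hS1) (inv_nonneg.2 hS0.le)
    (fun i => by
      rw [abs_mul, hs, one_mul, abs_of_pos (div_pos (F.ratio i).1 hS0), div_eq_inv_mul])
    K hKc.isClosed hKc hKsub hKdis (fun x => χ x * (F1 x - g x)) (hχ.mul (hF1c.sub hg)) hDK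
  -- near the arc, `D = F1 - g`
  have hDγ : ∀ x ∈ γ, ∀ᶠ y in 𝓝 x, χ y * (F1 y - g y) = F1 y - g y := by
    intro x hx
    obtain ⟨i, hi⟩ := hcov x hx
    by_cases h0 : i = i0
    · subst h0
      filter_upwards [hF10 x hi, hg0 x hi] with y h1 h2
      rw [h1, h2]; ring
    by_cases h1 : i = i1
    · subst h1
      filter_upwards [hF11 x hi, hg1 x hi] with y h1 h2
      rw [h1, h2]; ring
    filter_upwards [hχ1 x (mem_iUnion.2 ⟨⟨i, h0, h1⟩, hi⟩)] with y hy
    rw [hy, one_mul]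
  have hHz : ∀ (i : I) (j : ι), j ≠ i → ∀ x ∈ φ j '' γ, ∀ᶠ y in 𝓝 x, H (ψ i y) = 0 := by
    intro i j hj x hx
    have : (ψ i) ⁻¹' Kᶜ ∈ 𝓝 x :=
      (hψ i).continuous.continuousAt.preimage_mem_nhds
        (hKc.isClosed.isOpen_compl.mem_nhds (hKγ i j hj x hx))
    filter_upwards [this] with y hy
    exact hHK _ hy
  set f : EuclideanSpace ℝ (Fin d) → ℝ := fun x => g x + H x with hf
  have hfc : ContDiff ℝ 1 f := hg.add hHc
  -- local description of `f`
  have hfi : ∀ i : I, ∀ x ∈ φ i '' γ, ∃ c, ∀ᶠ y in 𝓝 x,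
      f y = c + (s i * (ρ i / S)) * f (ψ i y) := by
    intro i x hx
    obtain ⟨c, hc⟩ := hF1i i x hx
    refine ⟨c, ?_⟩
    have hz : ∀ᶠ y in 𝓝 x, ∀ j : I, j ≠ i → H (ψ j y) = 0 := by
      refine eventually_all.2 fun j => ?_
      by_cases hj : j = i
      · exact Eventually.of_forall fun _ h => absurd hj h
      · filter_upwards [hHz j i (fun h => hj (Subtype.ext h.symm)) x hx] with y hy _ using hy
    filter_upwards [hc, hDγ x (F.subset i hx), hz] with y h1 h2 h3
    have := hHeq y
    rw [Finset.sum_eq_single i (fun j _ hj => by rw [h3 j hj, mul_zero]) (by simp), h2] at this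
    simp only [hf]
    rw [this, h1]; ring
  have hfe : ∀ j, (j = i0 ∨ j = i1) → ∀ x ∈ φ j '' γ, ∀ᶠ y in 𝓝 x, f y = F1 y := by
    intro j hj x hx
    have hz : ∀ᶠ y in 𝓝 x, ∀ i : I, H (ψ i y) = 0 := by
      refine eventually_all.2 fun i => hHz i j ?_ x hx
      rintro rfl
      exact hj.elim i.2.1 i.2.2
    filter_upwards [hDγ x (F.subset j hx), hz] with y h2 h3
    have := hHeq y
    rw [Finset.sum_eq_zero (fun i _ => by rw [h3 i, mul_zero]), h2] at this
    simp only [hf]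
    rw [this]; ring
  refine ⟨f, hfc, ?_, ?_⟩
  · obtain ⟨z, hz, hmax⟩ := hγ.exists_isMaxOn ⟨a, ha⟩
      (hfc.continuous_fderiv (by simp)).norm.continuousOn
    have hle : ∀ x ∈ γ, ‖fderiv ℝ f x‖ ≤ S⁻¹ * ‖fderiv ℝ f z‖ := by
      intro x hx
      obtain ⟨i, hi⟩ := hcov x hx
      have hnn : 0 ≤ S⁻¹ * ‖fderiv ℝ f z‖ := mul_nonneg (inv_nonneg.2 hS0.le) (norm_nonneg _)
      by_cases h0 : i = i0
      · have : f =ᶠ[𝓝 x] fun _ => (0:ℝ) := by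
          filter_upwards [hfe i (Or.inl h0) x hi, hF10 x (h0 ▸ hi)] with y e1 e2
          rw [e1, e2]
        rw [this.fderiv_eq]; simpa using hnn
      by_cases h1 : i = i1
      · have : f =ᶠ[𝓝 x] fun _ => (1:ℝ) := by
          filter_upwards [hfe i (Or.inr h1) x hi, hF11 x (h1 ▸ hi)] with y e1 e2
          rw [e1, e2]
        rw [this.fderiv_eq]; simpa using hnn
      obtain ⟨c, hc⟩ := hfi ⟨i, h0, h1⟩ x hi
      obtain ⟨w, hw, rfl⟩ := hi
      have hder : HasFDerivAt (fun y => c + (s ⟨i, h0, h1⟩ * (ρ i / S)) * f (ψ i y))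
          ((s ⟨i, h0, h1⟩ * (ρ i / S)) • (fderiv ℝ f (ψ i (φ i w))).comp
            (fderiv ℝ (ψ i) (φ i w))) (φ i w) := by
        refine HasFDerivAt.const_add _ (HasFDerivAt.const_mul ?_ _)
        exact ((hfc.differentiable (by simp)).differentiableAt.hasFDerivAt).comp _
          ((hψ i).differentiable (by simp)).differentiableAt.hasFDerivAt
      have hr := (F.ratio i).1
      rw [EventuallyEq.fderiv_eq hc, hder.fderiv, hψφ, norm_smul, Real.norm_eq_abs, abs_mul, hs,
        one_mul, abs_of_pos (div_pos hr hS0)]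
      calc ρ i / S * ‖(fderiv ℝ f w).comp (fderiv ℝ (ψ i) (φ i w))‖
          ≤ ρ i / S * (‖fderiv ℝ f z‖ * (ρ i)⁻¹) := by
            refine mul_le_mul_of_nonneg_left ?_ (div_pos hr hS0).le
            exact (ContinuousLinearMap.opNorm_comp_le _ _).trans
              (mul_le_mul (hmax hw) (hψd i _) (norm_nonneg _) (norm_nonneg _))
        _ = _ := by field_simp
    have hz0 : ‖fderiv ℝ f z‖ = 0 := by
      have h1 := hle z hz
      have h2 := inv_lt_one_of_one_lt₀ hS1
      have h3 := norm_nonneg (fderiv ℝ f z)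
      nlinarith
    intro x hx
    have := hle x hx
    rw [hz0, mul_zero] at this
    exact norm_le_zero_iff.1 this
  · intro hcon
    have h0 := (hfe i0 (Or.inl rfl) a hi0).self_of_nhds
    have h1 := (hfe i1 (Or.inr rfl) b hi1).self_of_nhds
    rw [(hF10 a hi0).self_of_nhds] at h0
    rw [(hF11 b hi1).self_of_nhds] at h1
    have := hcon a ha b hb
    rw [h0, h1] at this
    exact zero_ne_one this


end Helpers

/-- Every self-similar arc of Hausdorff dimension > 1 is a Whitney set
(no open set condition assumed). -/
theorem selfSimilarArc_isWhitneySet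
    (d N : ℕ)
    (φ : Fin N → EuclideanSpace ℝ (Fin d) → EuclideanSpace ℝ (Fin d))
    (ρ : Fin N → ℝ) (hρ : ∀ i, ρ i ∈ Set.Ioo (0 : ℝ) 1)
    (hsim : ∀ i x y, dist (φ i x) (φ i y) = ρ i * dist x y)
    -- γ is the attractor of {φ_1, …, φ_N}
    (γ : Set (EuclideanSpace ℝ (Fin d)))
    (hγne : γ.Nonempty) (hγcomp : IsCompact γ)
    (hattr : γ = ⋃ i, φ i '' γ)
    -- γ is an arc
    (harc : IsArc γ)
    -- adjacent pieces meet in a single point, non-adjacent pieces are disjoint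
    (hadj : ∀ i j : Fin N, (i : ℕ) + 1 = (j : ℕ) →
      ∃ x, (φ i '' γ) ∩ (φ j '' γ) = {x})
    (hfar : ∀ i j : Fin N, (i : ℕ) + 1 < (j : ℕ) →
      (φ i '' γ) ∩ (φ j '' γ) = ∅)
    -- Hausdorff dimension > 1
    (hdim : 1 < dimH γ) :
    IsWhitneySet γ := by
  have hfar' : ∀ i j : Fin N, (i : ℕ) < (j : ℕ) → (φ i '' γ ∩ φ j '' γ).Subsingleton := by
    intro i j hij
    rcases Nat.lt_or_ge ((i : ℕ) + 1) j with h | h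
    · rw [hfar i j h]; exact subsingleton_empty
    · obtain ⟨x, hx⟩ := hadj i j (by omega)
      rw [hx]; exact subsingleton_singleton
  have F : Fam γ φ ρ :=
    { ratio := hρ
      sim := hsim
      cover := hattr
      sub := by
        intro i j hij
        rcases lt_or_gt_of_ne (fun h => hij (Fin.ext h) : (i : ℕ) ≠ j) with h | h
        · exact hfar' i j h
        · rw [inter_comm]; exact hfar' j i h }
  obtain ⟨κ, _, ψ, σ, G, hG⟩ := F.large hγcomp hdim
  refine ⟨hγcomp, ?_, G.whitney hγcomp harc hG⟩
  obtain ⟨h, hc, -, rfl⟩ := harc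
  exact (isConnected_Icc zero_le_one).image h hc
end
end
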